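/- arXiv:2301.03417 — 6 statements merged into one kernel-verified Lean document; each statement's English description precedes it below -/
import Mathlib

section
/- A subcubic digraph D (every vertex has total degree at most 3) is 2-mixing if and only if D is an oriented graph, i.e. contains no digon. -/
/-- A relation (digraph) is acyclic if no vertex lies on a directed cycle. -/
def RelAcyclic {V : Type} (r : V → V → Prop) : Prop :=
  ∀ v, ¬ Relation.TransGen r v v

/-- `α` is a `k`-dicolouring of the digraph `D`: each colour class induces
an acyclic subdigraph. -/
def IsDicolouring {V : Type} (D : V → V → Prop) (k : ℕ) (α : V → Fin k) : Prop :=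
  ∀ c : Fin k, RelAcyclic (fun u v => D u v ∧ α u = c ∧ α v = c)

/-- Two colourings differ on exactly one vertex. -/
def RecolAdj {V : Type} {k : ℕ} (α β : V → Fin k) : Prop :=
  ∃ v, α v ≠ β v ∧ ∀ w, w ≠ v → α w = β w

/-- A single edge of the `k`-dicolouring graph `D_k(D)`. -/
def RecolStep {V : Type} (D : V → V → Prop) (k : ℕ) (α β : V → Fin k) : Prop :=
  IsDicolouring D k α ∧ IsDicolouring D k β ∧ RecolAdj α β

/-- The digraph `D` is `k`-mixing: the `k`-dicolouring graph is connected. -/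
def Mixing {V : Type} (D : V → V → Prop) (k : ℕ) : Prop :=
  ∀ α β : V → Fin k, IsDicolouring D k α → IsDicolouring D k β →
    Relation.ReflTransGen (RecolStep D k) α β

/-- Out-degree of `v` in the subdigraph of `D` induced by `S`. -/
noncomputable def outDegOn {V : Type} (D : V → V → Prop) (S : Set V) (v : V) : ℕ :=
  {w ∈ S | D v w}.ncard

/-- In-degree of `v` in the subdigraph of `D` induced by `S`. -/
noncomputable def inDegOn {V : Type} (D : V → V → Prop) (S : Set V) (v : V) : ℕ :=
  {w ∈ S | D w v}.ncard

/-- An oriented graph: a digraph with no digon (hence also no loop). -/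
def Oriented {V : Type} (D : V → V → Prop) : Prop :=
  ∀ u v, D u v → ¬ D v u

/-- A walk of length `m` in the `k`-dicolouring graph (a redicolouring sequence):
consecutive dicolourings differ on exactly one vertex. -/
def RecolWalk {V : Type} (D : V → V → Prop) (k m : ℕ) (γ : ℕ → V → Fin k) : Prop :=
  (∀ i ≤ m, IsDicolouring D k (γ i)) ∧ ∀ i < m, RecolAdj (γ i) (γ (i + 1))

/-- A frozen `k`-dicolouring: no single vertex can be recoloured so as to
yield another `k`-dicolouring. -/
def FrozenDicolouring {V : Type} [DecidableEq V] (D : V → V → Prop) (k : ℕ)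
    (α : V → Fin k) : Prop :=
  IsDicolouring D k α ∧
    ∀ (v : V) (c : Fin k), c ≠ α v → ¬ IsDicolouring D k (Function.update α v c)

/-- The arc set of a digraph, as a set of ordered pairs. -/
def arcSet {V : Type} (D : V → V → Prop) : Set (V × V) := {p | D p.1 p.2}

/-- The arcs of `D` lying inside a set `S` of vertices. -/
def arcSetOn {V : Type} (D : V → V → Prop) (S : Set V) : Set (V × V) :=
  {p | p.1 ∈ S ∧ p.2 ∈ S ∧ D p.1 p.2}

/-! If `v` is not in a *matched pair* (an arc `a ⟶ v` with `d⁻(a) ≥ 2` and `d⁺(v) ≥ 2`), every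
recolouring sequence of `D - v` lifts to `D`: when recolouring `x` is blocked, recolouring `v`
first unblocks it, for otherwise two monochromatic cycles of different colours would meet at most in
`{x, v}`, and since `v` has in- or out-degree at most one, `x` and `v` would form a matched pair.
So one may assume that every non-isolated vertex is matched. The pairs are then disjoint, the head
of a pair has a unique in-neighbour and its tail a unique out-neighbour, so a cycle contains
whole pairs, and at least two of them. Hence making all pairs bichromatic yields a dicolouring,
and it stays one while a single pair is being flipped. Conversely, the two ends of a digon always
have different colours, so with two colours neither can ever be recoloured. -/

open Function Relation

section Dicolourings

variable {V : Type} {D r : V → V → Prop} {S : Set V} {k : ℕ} {f g : V → Fin k} {v x : V}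

/-- `S` is nonempty and every vertex of `S` has an out-neighbour and an in-neighbour in `S`.
Such sets stand in for directed cycles: a finite digraph has one iff it has a directed cycle. -/
structure Circulating (r : V → V → Prop) (S : Set V) : Prop where
  nonempty : S.Nonempty
  exists_out : ∀ x ∈ S, ∃ y ∈ S, r x y
  exists_in : ∀ x ∈ S, ∃ y ∈ S, r y x

theorem Circulating.swap (hS : Circulating r S) : Circulating (swap r) S :=
  ⟨hS.nonempty, hS.exists_in, hS.exists_out⟩

theorem circulating_restrict_iff {p : V → Prop} :
    Circulating (fun x y => r x y ∧ p x ∧ p y) S ↔ Circulating r S ∧ ∀ x ∈ S, p x := by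
  constructor
  · intro hS
    refine ⟨⟨hS.nonempty, fun x hx => ?_, fun x hx => ?_⟩, fun x hx => ?_⟩
    · obtain ⟨y, hy, hxy⟩ := hS.exists_out x hx
      exact ⟨y, hy, hxy.1⟩
    · obtain ⟨y, hy, hyx⟩ := hS.exists_in x hx
      exact ⟨y, hy, hyx.1⟩
    · obtain ⟨y, -, hxy⟩ := hS.exists_out x hx
      exact hxy.2.1
  · rintro ⟨hS, hp⟩
    refine ⟨hS.nonempty, fun x hx => ?_, fun x hx => ?_⟩
    · obtain ⟨y, hy, hxy⟩ := hS.exists_out x hx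
      exact ⟨y, hy, hxy, hp x hx, hp y hy⟩
    · obtain ⟨y, hy, hyx⟩ := hS.exists_in x hx
      exact ⟨y, hy, hyx, hp y hy, hp x hx⟩

theorem circulating_setOf_transGen (h : TransGen r v v) :
    Circulating r {x | TransGen r v x ∧ TransGen r x v} where
  nonempty := ⟨v, h, h⟩
  exists_out := by
    rintro x ⟨hvx, hxv⟩
    obtain ⟨y, hxy, hyv⟩ := TransGen.head'_iff.1 hxv
    exact ⟨y, ⟨hvx.tail hxy, TransGen.trans_right hyv h⟩, hxy⟩
  exists_in := by
    rintro x ⟨hvx, hxv⟩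
    obtain ⟨y, hvy, hyx⟩ := TransGen.tail'_iff.1 hvx
    exact ⟨y, ⟨TransGen.trans_left h hvy, hxv.head hyx⟩, hyx⟩

theorem RelAcyclic.mono {s : V → V → Prop} (hs : RelAcyclic s) (h : ∀ x y, r x y → s x y) :
    RelAcyclic r :=
  fun x hx => hs x (TransGen.mono h x x hx)

theorem RelAcyclic.exists_sink [Finite V] (hr : RelAcyclic r) (hS : S.Nonempty) :
    ∃ x ∈ S, ∀ y ∈ S, ¬ r x y := by
  have : IsTrans V (swap (TransGen r)) := ⟨fun _ _ _ hba hcb => hcb.trans hba⟩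
  have : Std.Irrefl (swap (TransGen r)) := ⟨hr⟩
  obtain ⟨x, hx, hmin⟩ :=
    (Finite.wellFounded_of_trans_of_irrefl (swap (TransGen r))).has_min S hS
  exact ⟨x, hx, fun y hy hxy => hmin y hy (.single hxy)⟩

theorem relAcyclic_iff_forall_not_circulating [Finite V] :
    RelAcyclic r ↔ ∀ S, ¬ Circulating r S := by
  refine ⟨fun hr S hS => ?_, fun h v hv => h _ (circulating_setOf_transGen hv)⟩
  obtain ⟨x, hx, hsink⟩ := hr.exists_sink hS.nonempty
  obtain ⟨y, hy, hxy⟩ := hS.exists_out x hx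
  exact hsink y hy hxy

theorem isDicolouring_iff_forall_circulating [Finite V] :
    IsDicolouring D k f ↔ ∀ c S, Circulating D S → ∃ x ∈ S, f x ≠ c := by
  refine forall_congr' fun c => relAcyclic_iff_forall_not_circulating.trans ?_
  simp only [circulating_restrict_iff (p := fun x => f x = c), not_and, not_forall, exists_prop]

theorem not_isDicolouring_iff_exists_circulating [Finite V] :
    ¬ IsDicolouring D k f ↔ ∃ c S, Circulating D S ∧ ∀ x ∈ S, f x = c := by
  simp [isDicolouring_iff_forall_circulating]

theorem IsDicolouring.swap [Finite V] (hf : IsDicolouring D k f) :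
    IsDicolouring (swap D) k f :=
  isDicolouring_iff_forall_circulating.2 fun c S hS =>
    isDicolouring_iff_forall_circulating.1 hf c S hS.swap

theorem IsDicolouring.comp_injective [Finite V] {l : ℕ} {σ : Fin k → Fin l} (hσ : Injective σ)
    (hf : IsDicolouring D k f) : IsDicolouring D l (σ ∘ f) := by
  rw [isDicolouring_iff_forall_circulating] at hf ⊢
  intro c S hS
  by_contra! hc
  obtain ⟨z, hz⟩ := hS.nonempty
  obtain ⟨x, hx, hne⟩ := hf (f z) S hS
  exact hne (hσ ((hc x hx).trans (hc z hz).symm))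

theorem IsDicolouring.ne_of_digon {u : V} (hf : IsDicolouring D k f) (huv : D u v)
    (hvu : D v u) : f u ≠ f v := fun h =>
  hf (f u) u (.tail (.single ⟨huv, rfl, h.symm⟩) ⟨hvu, h.symm, rfl⟩)

/-! ### Isolating a vertex -/

/-- The digraph obtained from `D` by deleting all arcs at `v`. It plays the role of `D - v`, the
vertex `v` being kept so that colourings of both digraphs have the same type. -/
def isolateVertex (D : V → V → Prop) (v : V) : V → V → Prop :=
  fun x y => D x y ∧ x ≠ v ∧ y ≠ v

/-- `v` is incident with at least one arc. -/
def NonIsolated (D : V → V → Prop) (v : V) : Prop :=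
  ∃ w, D v w ∨ D w v

theorem swap_isolateVertex : swap (isolateVertex D v) = isolateVertex (swap D) v := by
  ext x y
  exact and_congr_right' and_comm

theorem circulating_isolateVertex_iff :
    Circulating (isolateVertex D v) S ↔ Circulating D S ∧ v ∉ S := by
  refine circulating_restrict_iff.trans (and_congr_right' ?_)
  exact ⟨fun h hv => h v hv rfl, fun hv x hx hxv => hv (hxv ▸ hx)⟩

theorem ncard_arcSet_isolateVertex_lt [Finite V] (hv : NonIsolated D v) :
    (arcSet (isolateVertex D v)).ncard < (arcSet D).ncard := by
  refine Set.ncard_lt_ncard ?_ (Set.toFinite _)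
  rw [Set.ssubset_iff_of_subset fun _ hp => hp.1]
  obtain ⟨w, hvw | hwv⟩ := hv
  · exact ⟨(v, w), hvw, fun h => h.2.1 rfl⟩
  · exact ⟨(w, v), hwv, fun h => h.2.2 rfl⟩

theorem isolateVertex_induction [Finite V] {P : (V → V → Prop) → Prop}
    (ind : ∀ D, (∀ v, NonIsolated D v → P (isolateVertex D v)) → P D) (D : V → V → Prop) : P D :=
  (measure fun D : V → V → Prop => (arcSet D).ncard).wf.induction D fun D ih =>
    ind D fun _ hv => ih _ (ncard_arcSet_isolateVertex_lt hv)

theorem Oriented.isolate (hD : Oriented D) (v : V) : Oriented (isolateVertex D v) :=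
  fun x y hxy hyx => hD x y hxy.1 hyx.1

theorem Oriented.irrefl (hD : Oriented D) (v : V) : ¬ D v v :=
  fun h => hD v v h h

theorem Oriented.ne (hD : Oriented D) (h : D x v) : x ≠ v :=
  fun hxv => hD.irrefl v (hxv ▸ h)

theorem IsDicolouring.isolate (hf : IsDicolouring D k f) (v : V) :
    IsDicolouring (isolateVertex D v) k f :=
  fun c => (hf c).mono fun _ _ h => ⟨h.1.1, h.2⟩

theorem IsDicolouring.isolate_congr (hf : IsDicolouring (isolateVertex D v) k f)
    (h : Set.EqOn f g {v}ᶜ) : IsDicolouring (isolateVertex D v) k g :=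
  fun c => (hf c).mono fun _ _ ⟨hD, hx, hy⟩ => ⟨hD, (h hD.2.1).trans hx, (h hD.2.2).trans hy⟩

theorem IsDicolouring.mem_of_isolate [Finite V] (hf : IsDicolouring (isolateVertex D v) k f)
    (hS : Circulating D S) {c : Fin k} (hc : ∀ x ∈ S, f x = c) : v ∈ S := by
  by_contra hv
  obtain ⟨x, hx, hne⟩ :=
    isDicolouring_iff_forall_circulating.1 hf c S (circulating_isolateVertex_iff.2 ⟨hS, hv⟩)
  exact hne (hc x hx)

theorem IsDicolouring.of_isolate [Finite V] (hf : IsDicolouring (isolateVertex D v) k f)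
    (hv : ∀ w, D w v → f w ≠ f v) : IsDicolouring D k f := by
  by_contra hD
  obtain ⟨c, S, hS, hc⟩ := not_isDicolouring_iff_exists_circulating.1 hD
  have hvS : v ∈ S := hf.mem_of_isolate hS hc
  obtain ⟨w, hw, hwv⟩ := hS.exists_in v hvS
  exact hv w hwv ((hc w hw).trans (hc v hvS).symm)

/-! ### Existence of dicolourings -/

/-- Every vertex has out-degree at most one or in-degree at most one, that is,
`max_v min (d⁺(v), d⁻(v)) ≤ 1`. -/
def MinDegLEOne (D : V → V → Prop) : Prop :=
  ∀ v, {w | D v w}.Subsingleton ∨ {w | D w v}.Subsingleton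

theorem MinDegLEOne.isolate (hD : MinDegLEOne D) (v : V) : MinDegLEOne (isolateVertex D v) :=
  fun x => (hD x).imp (fun h => h.anti fun _ hw => hw.1) fun h => h.anti fun _ hw => hw.1

theorem minDegLEOne_of_degree_le_three [Finite V]
    (hdeg : ∀ v, outDegOn D Set.univ v + inDegOn D Set.univ v ≤ 3) : MinDegLEOne D := by
  intro v
  simp only [← Set.ncard_le_one_iff_subsingleton]
  have := hdeg v
  simp only [outDegOn, inDegOn, Set.mem_univ, true_and] at this
  lia

theorem eqOn_update_compl [DecidableEq V] {c : Fin k} : Set.EqOn f (update f v c) {v}ᶜ :=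
  fun _ hw => (update_of_ne hw _ _).symm

theorem exists_isDicolouring_update_of_subsingleton [Finite V] [DecidableEq V]
    [Nontrivial (Fin k)] (hirr : ¬ D v v) (hv : {w | D w v}.Subsingleton)
    (hf : IsDicolouring (isolateVertex D v) k f) : ∃ c, IsDicolouring D k (update f v c) := by
  obtain ⟨c, hc⟩ : ∃ c, ∀ w, D w v → f w ≠ c := by
    by_cases h : ∃ p, D p v
    · obtain ⟨p, hp⟩ := h
      obtain ⟨c, hc⟩ := exists_ne (f p)
      exact ⟨c, fun w hw => hv hw hp ▸ hc.symm⟩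
    · exact ⟨f v, fun w hw => (h ⟨w, hw⟩).elim⟩
  refine ⟨c, (hf.isolate_congr eqOn_update_compl).of_isolate ?_⟩
  intro w hw
  have hwv : w ≠ v := by rintro rfl; exact hirr hw
  simpa [hwv] using hc w hw

theorem exists_isDicolouring [Finite V] [Nontrivial (Fin k)] (hirr : ∀ v, ¬ D v v)
    (hmin : MinDegLEOne D) : ∃ f, IsDicolouring D k f := by
  classical
  induction D using isolateVertex_induction with
  | ind D ih =>
  by_cases hD : ∃ v, NonIsolated D v
  · obtain ⟨v, hv⟩ := hD
    obtain ⟨f, hf⟩ := ih v hv (fun x hx => hirr x hx.1) (hmin.isolate v)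
    obtain hout | hin := hmin v
    · obtain ⟨c, hc⟩ := exists_isDicolouring_update_of_subsingleton (D := swap D) (hirr v) hout
        (swap_isolateVertex (D := D) ▸ hf.swap)
      exact ⟨_, hc.swap⟩
    · obtain ⟨c, hc⟩ := exists_isDicolouring_update_of_subsingleton (hirr v) hin hf
      exact ⟨_, hc⟩
  · obtain ⟨c⟩ : Nonempty (Fin k) := inferInstance
    refine ⟨fun _ => c, isDicolouring_iff_forall_circulating.2 fun _ S hS => ?_⟩
    obtain ⟨x, hx⟩ := hS.nonempty
    obtain ⟨y, -, hxy⟩ := hS.exists_out x hx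
    exact (hD ⟨x, y, .inl hxy⟩).elim

/-! ### Recolouring -/

/-- `β` is reachable from `α` in the dicolouring graph. Reachability is reflexive even at
colourings that are not dicolourings. -/
abbrev RecolReachable (D : V → V → Prop) (k : ℕ) : (V → Fin k) → (V → Fin k) → Prop :=
  ReflTransGen (RecolStep D k)

theorem RecolStep.symm (h : RecolStep D k f g) : RecolStep D k g f := by
  obtain ⟨hf, hg, v, hne, heq⟩ := h
  exact ⟨hg, hf, v, hne.symm, fun w hw => (heq w hw).symm⟩

theorem recolReachable_symm (h : RecolReachable D k f g) : RecolReachable D k g f := by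
  have : Std.Symm (RecolStep D k) := ⟨fun _ _ => RecolStep.symm⟩
  exact symm h

theorem recolReachable_of_eqOn (hf : IsDicolouring D k f) (hg : IsDicolouring D k g)
    (h : Set.EqOn f g {v}ᶜ) : RecolReachable D k f g := by
  by_cases hv : f v = g v
  · have hfg : f = g := by
      funext w
      by_cases hw : w = v
      · rw [hw, hv]
      · exact h hw
    rw [hfg]
  · exact .single ⟨hf, hg, v, hv, fun w hw => h hw⟩

theorem RecolStep.eq_of_digon {α β : V → Fin 2} {u : V} (h : RecolStep D 2 α β)
    (huv : D u v) (hvu : D v u) : β u = α u := by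
  obtain ⟨hα, hβ, w, -, heq⟩ := h
  have hαne := hα.ne_of_digon huv hvu
  have hβne := hβ.ne_of_digon huv hvu
  by_cases hu : u = w
  · have hv : v ≠ w := by rintro rfl; exact hαne (congrArg α hu)
    have := heq v hv
    lia
  · exact (heq u hu).symm

theorem oriented_of_mixing [Finite V] (hirr : ∀ v, ¬ D v v) (hmin : MinDegLEOne D)
    (hmix : Mixing D 2) : Oriented D := by
  intro u v huv hvu
  obtain ⟨α, hα⟩ := exists_isDicolouring (k := 2) hirr hmin
  have hconst : ∀ β, RecolReachable D 2 α β → β u = α u := by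
    intro β hβ
    induction hβ with
    | refl => rfl
    | tail _ hstep ih => exact (hstep.eq_of_digon huv hvu).trans ih
  have hrev : (α u).rev = α u := hconst _ (hmix α _ hα (hα.comp_injective Fin.rev_injective))
  have : ∀ c : Fin 2, c.rev ≠ c := by decide
  exact this _ hrev

/-! ### Matched pairs -/

/-- An arc `a ⟶ v` such that `a` has at least two in-neighbours and `v` at least two
out-neighbours. Pairs of this kind are the obstruction to lifting recolouring sequences. -/
structure MatchedPair (D : V → V → Prop) (a v : V) : Prop where
  arc : D a v
  nontrivial_in : {w | D w a}.Nontrivial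
  nontrivial_out : {w | D v w}.Nontrivial

/-- `v` is the head or the tail of a matched pair. Being unmatched is what allows recolouring
sequences of `D - v` to be lifted. -/
def IsMatched (D : V → V → Prop) (v : V) : Prop :=
  ∃ x, MatchedPair D x v ∨ MatchedPair D v x

variable {a b w : V}

theorem MatchedPair.swap (h : MatchedPair D a v) : MatchedPair (swap D) v a :=
  ⟨h.arc, h.nontrivial_out, h.nontrivial_in⟩

theorem MatchedPair.eq_of_arc_head (hmin : MinDegLEOne D) (h : MatchedPair D a v)
    (hw : D w v) : w = a :=
  ((hmin v).resolve_left (Set.not_subsingleton_iff.2 h.nontrivial_out)) hw h.arc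

theorem MatchedPair.eq_of_arc_tail (hmin : MinDegLEOne D) (h : MatchedPair D a v)
    (hw : D a w) : w = v :=
  ((hmin a).resolve_right (Set.not_subsingleton_iff.2 h.nontrivial_in)) hw h.arc

theorem MatchedPair.tail_ne_head (hmin : MinDegLEOne D) (h : MatchedPair D a v)
    (h' : MatchedPair D b w) : a ≠ w := by
  rintro rfl
  exact (hmin a).elim (Set.not_subsingleton_iff.2 h'.nontrivial_out)
    (Set.not_subsingleton_iff.2 h.nontrivial_in)

theorem MatchedPair.disjoint (hmin : MinDegLEOne D) (h : MatchedPair D a v)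
    (h' : MatchedPair D b w) (hba : b ≠ a) : b ≠ v ∧ w ≠ a ∧ w ≠ v := by
  refine ⟨h'.tail_ne_head hmin h, (h.tail_ne_head hmin h').symm, ?_⟩
  rintro rfl
  exact hba (h.eq_of_arc_head hmin h'.arc)

theorem Circulating.head_mem_iff (hmin : MinDegLEOne D) (hS : Circulating D S)
    (h : MatchedPair D a v) : v ∈ S ↔ a ∈ S := by
  constructor <;> intro hmem
  · obtain ⟨y, hy, hyv⟩ := hS.exists_in v hmem
    exact h.eq_of_arc_head hmin hyv ▸ hy
  · obtain ⟨y, hy, hay⟩ := hS.exists_out a hmem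
    exact h.eq_of_arc_tail hmin hay ▸ hy

theorem nontrivial_out_of_inter_subset (hD : Oriented D) (harc : D x v) {S T : Set V}
    (hS : Circulating D S) (hT : Circulating D T) (hvS : v ∈ S) (hvT : v ∈ T)
    (hST : S ∩ T ⊆ {x, v}) : {w | D v w}.Nontrivial := by
  obtain ⟨y, hyS, hvy⟩ := hS.exists_out v hvS
  obtain ⟨z, hzT, hvz⟩ := hT.exists_out v hvT
  refine ⟨y, hvy, z, hvz, ?_⟩
  rintro rfl
  obtain rfl | rfl := hST ⟨hyS, hzT⟩
  · exact hD _ _ harc hvy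
  · exact hD.irrefl _ hvy

theorem matchedPair_of_inter_subset (hD : Oriented D) (hv : {w | D w v}.Subsingleton)
    {S T : Set V} (hS : Circulating D S) (hT : Circulating D T) (hvS : v ∈ S) (hvT : v ∈ T)
    (hST : S ∩ T ⊆ {x, v}) : MatchedPair D x v := by
  obtain ⟨p, hpS, hpv⟩ := hS.exists_in v hvS
  obtain ⟨q, hqT, hqv⟩ := hT.exists_in v hvT
  obtain rfl : p = q := hv hpv hqv
  obtain rfl : p = x := (hST ⟨hpS, hqT⟩).resolve_right (hD.ne hpv)
  exact ⟨hpv,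
    nontrivial_out_of_inter_subset (D := swap D) (fun _ _ h => hD _ _ h) hpv hS.swap hT.swap
      hpS hqT (Set.pair_comm v p ▸ hST),
    nontrivial_out_of_inter_subset hD hpv hS hT hvS hvT hST⟩

theorem isMatched_of_inter_subset (hD : Oriented D) (hmin : MinDegLEOne D) {S T : Set V}
    (hS : Circulating D S) (hT : Circulating D T) (hvS : v ∈ S) (hvT : v ∈ T)
    (hST : S ∩ T ⊆ {x, v}) : IsMatched D v := by
  obtain hout | hin := hmin v
  · exact ⟨x, .inr (matchedPair_of_inter_subset (D := swap D) (fun _ _ h => hD _ _ h) hout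
      hS.swap hT.swap hvS hvT hST).swap⟩
  · exact ⟨x, .inl (matchedPair_of_inter_subset hD hin hS hT hvS hvT hST)⟩

end Dicolourings

/-! ### Lifting recolouring sequences -/

section Lifting

variable {V : Type} [Finite V] {D : V → V → Prop} {v x : V}

theorem isDicolouring_update_or_of_not_isMatched [DecidableEq V] {k : ℕ} {g : V → Fin k}
    {c : Fin k} (hD : Oriented D) (hmin : MinDegLEOne D) (hv : ¬ IsMatched D v)
    (hg : IsDicolouring D k g) (hc : g x ≠ c)
    (hx : IsDicolouring (isolateVertex D v) k (update g x c)) :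
    IsDicolouring D k (update g x c) ∨ IsDicolouring D k (update g v (g x)) := by
  by_contra! hnot
  obtain ⟨c₁, S, hS, hcS⟩ := not_isDicolouring_iff_exists_circulating.1 hnot.1
  obtain ⟨c₂, T, hT, hcT⟩ := not_isDicolouring_iff_exists_circulating.1 hnot.2
  have hvS : v ∈ S := hx.mem_of_isolate hS hcS
  have hxS : x ∈ S :=
    ((hg.isolate x).isolate_congr eqOn_update_compl).mem_of_isolate hS hcS
  have hvT : v ∈ T :=
    ((hg.isolate v).isolate_congr eqOn_update_compl).mem_of_isolate hT hcT
  obtain rfl : c = c₁ := by simpa using hcS x hxS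
  obtain rfl : g x = c₂ := by simpa using hcT v hvT
  refine hv (isMatched_of_inter_subset hD hmin hS hT hvS hvT (x := x) ?_)
  rintro y ⟨hyS, hyT⟩
  by_contra! hy
  simp only [Set.mem_insert_iff, Set.mem_singleton_iff, not_or] at hy
  have hyc : g y = c := by simpa [hy.1] using hcS y hyS
  have hyx : g y = g x := by simpa [hy.2] using hcT y hyT
  exact hc (hyx.symm.trans hyc)

theorem isDicolouring_update_update [DecidableEq V] {k : ℕ} {g : V → Fin k} {c : Fin k}
    (hxv : x ≠ v) (hc : g x ≠ c) (hx : IsDicolouring (isolateVertex D v) k (update g x c))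
    (hv : IsDicolouring D k (update g v (g x))) :
    IsDicolouring D k (update (update g v (g x)) x c) := by
  by_contra hnot
  obtain ⟨d, S, hS, hd⟩ := not_isDicolouring_iff_exists_circulating.1 hnot
  have hvS : v ∈ S := by
    refine (hx.isolate_congr fun w hw => ?_).mem_of_isolate hS hd
    rw [update_comm hxv.symm, update_of_ne hw]
  obtain rfl : g x = d := by simpa [hxv.symm] using hd v hvS
  have hxS : x ∉ S := fun hxS => hc (by simpa using (hd x hxS).symm)
  obtain ⟨y, hy, hne⟩ := isDicolouring_iff_forall_circulating.1 hv (g x) S hS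
  exact hne (by simpa [ne_of_mem_of_not_mem hy hxS] using hd y hy)

theorem exists_recolReachable_update [DecidableEq V] {k : ℕ} {g : V → Fin k} {c : Fin k}
    (hD : Oriented D) (hmin : MinDegLEOne D) (hv : ¬ IsMatched D v) (hg : IsDicolouring D k g)
    (hxv : x ≠ v) (hc : g x ≠ c) (hx : IsDicolouring (isolateVertex D v) k (update g x c)) :
    ∃ h, RecolReachable D k g h ∧ IsDicolouring D k h ∧ Set.EqOn h (update g x c) {v}ᶜ := by
  obtain h | h := isDicolouring_update_or_of_not_isMatched hD hmin hv hg hc hx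
  · exact ⟨_, recolReachable_of_eqOn hg h eqOn_update_compl, h, Set.eqOn_refl _ _⟩
  · have h' := isDicolouring_update_update hxv hc hx h
    refine ⟨_, .trans (recolReachable_of_eqOn hg h eqOn_update_compl)
      (recolReachable_of_eqOn h h' eqOn_update_compl), h', fun w hw => ?_⟩
    rw [update_comm hxv.symm, update_of_ne hw]

theorem exists_recolReachable_of_recolStep_isolateVertex {k : ℕ} {g γ δ : V → Fin k}
    (hD : Oriented D) (hmin : MinDegLEOne D) (hv : ¬ IsMatched D v) (hg : IsDicolouring D k g)
    (hgγ : Set.EqOn g γ {v}ᶜ) (hstep : RecolStep (isolateVertex D v) k γ δ) :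
    ∃ h, RecolReachable D k g h ∧ IsDicolouring D k h ∧ Set.EqOn h δ {v}ᶜ := by
  classical
  obtain ⟨-, hδ, x, hne, heq⟩ := hstep
  by_cases hxv : x = v
  · subst hxv
    exact ⟨g, .refl, hg, hgγ.trans fun w hw => heq w hw⟩
  have hagree : Set.EqOn (update g x (δ x)) δ {v}ᶜ := by
    intro w hw
    by_cases hwx : w = x
    · simp [hwx]
    · rw [update_of_ne hwx, hgγ hw, heq w hwx]
  obtain ⟨h, hreach, hh, hhδ⟩ := exists_recolReachable_update hD hmin hv hg hxv
    (hgγ hxv ▸ hne) (hδ.isolate_congr hagree.symm)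
  exact ⟨h, hreach, hh, hhδ.trans hagree⟩

theorem mixing_of_mixing_isolateVertex {k : ℕ} (hD : Oriented D) (hmin : MinDegLEOne D)
    (hv : ¬ IsMatched D v) (hmix : Mixing (isolateVertex D v) k) : Mixing D k := by
  intro α β hα hβ
  have lift : ∀ γ, RecolReachable (isolateVertex D v) k α γ →
      ∃ h, RecolReachable D k α h ∧ IsDicolouring D k h ∧ Set.EqOn h γ {v}ᶜ := by
    intro γ hγ
    induction hγ with
    | refl => exact ⟨α, .refl, hα, Set.eqOn_refl _ _⟩
    | tail _ hstep ih =>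
      obtain ⟨g, hαg, hg, hgγ⟩ := ih
      obtain ⟨h, hgh, hh, hhδ⟩ :=
        exists_recolReachable_of_recolStep_isolateVertex hD hmin hv hg hgγ hstep
      exact ⟨h, hαg.trans hgh, hh, hhδ⟩
  obtain ⟨h, hαh, hh, hhβ⟩ := lift β (hmix α β (hα.isolate v) (hβ.isolate v))
  exact hαh.trans (recolReachable_of_eqOn hh hβ hhβ)

end Lifting

/-! ### Perfectly matched digraphs -/

section PerfectlyMatched

theorem exists_reflTransGen_of_measure_lt {α : Type*} {r : α → α → Prop} {P Q : α → Prop}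
    (μ : α → ℕ)
    (step : ∀ a, P a → ¬ Q a → ∃ b, P b ∧ ReflTransGen r a b ∧ μ b < μ a) {a : α} (ha : P a) :
    ∃ b, P b ∧ Q b ∧ ReflTransGen r a b := by
  induction a using (measure μ).wf.induction with
  | h a ih =>
  by_cases hQ : Q a
  · exact ⟨a, ha, hQ, .refl⟩
  obtain ⟨b, hb, hab, hlt⟩ := step a ha hQ
  obtain ⟨c, hc, hQc, hbc⟩ := ih b hlt hb
  exact ⟨c, hc, hQc, hab.trans hbc⟩

variable {V : Type} {D : V → V → Prop} {k : ℕ} {f g : V → Fin k} {S : Set V} {a v x : V}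

/-- Every matched pair is bichromatic under `f`. These colourings are the canonical ones through
which all dicolourings of a perfectly matched digraph are connected. -/
def SplitsPairs (D : V → V → Prop) (f : V → Fin k) : Prop :=
  ∀ a v, MatchedPair D a v → f a ≠ f v

/-- Every non-isolated vertex lies in a matched pair: the digraphs in which no vertex can be
removed by lifting recolouring sequences. -/
def PerfectlyMatched (D : V → V → Prop) : Prop :=
  ∀ v, NonIsolated D v → IsMatched D v

theorem Circulating.exists_matchedPair_of_mem (hmin : MinDegLEOne D) (hpm : PerfectlyMatched D)
    (hS : Circulating D S) (hx : x ∈ S) :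
    ∃ b w, MatchedPair D b w ∧ b ∈ S ∧ w ∈ S ∧ (x = b ∨ x = w) := by
  obtain ⟨y, -, hxy⟩ := hS.exists_out x hx
  obtain ⟨z, hzx | hxz⟩ := hpm x ⟨y, .inl hxy⟩
  · exact ⟨z, x, hzx, (hS.head_mem_iff hmin hzx).1 hx, hx, .inr rfl⟩
  · exact ⟨x, z, hxz, hx, (hS.head_mem_iff hmin hxz).2 hx, .inl rfl⟩

theorem Circulating.exists_matchedPair_tail_ne (hD : Oriented D) (hmin : MinDegLEOne D)
    (hpm : PerfectlyMatched D) (hS : Circulating D S) (a : V) :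
    ∃ b w, MatchedPair D b w ∧ b ∈ S ∧ w ∈ S ∧ b ≠ a := by
  by_contra! honly
  obtain ⟨z, hz⟩ := hS.nonempty
  obtain ⟨b, v, hbv, hbS, hvS, -⟩ := hS.exists_matchedPair_of_mem hmin hpm hz
  obtain rfl := honly b v hbv hbS hvS
  obtain ⟨q, hq, hvq⟩ := hS.exists_out v hvS
  obtain ⟨b', w, hbw, hbS', hwS, hqw⟩ := hS.exists_matchedPair_of_mem hmin hpm hq
  obtain rfl := honly b' w hbw hbS' hwS
  obtain rfl := hbv.eq_of_arc_tail hmin hbw.arc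
  obtain rfl | rfl := hqw
  · exact hD _ _ hbv.arc hvq
  · exact hD.irrefl _ hvq

theorem isDicolouring_of_forall_matchedPair_ne [Finite V] (hD : Oriented D)
    (hmin : MinDegLEOne D) (hpm : PerfectlyMatched D) (a : V)
    (hf : ∀ b w, MatchedPair D b w → b ≠ a → f b ≠ f w) : IsDicolouring D k f := by
  by_contra hnot
  obtain ⟨c, S, hS, hc⟩ := not_isDicolouring_iff_exists_circulating.1 hnot
  obtain ⟨b, w, hbw, hb, hw, hba⟩ := hS.exists_matchedPair_tail_ne hD hmin hpm a
  exact hf b w hbw hba ((hc b hb).trans (hc w hw).symm)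

theorem ncard_monochromatic_pairs_update_lt [Finite V] [DecidableEq V] (hD : Oriented D)
    (hmin : MinDegLEOne D) (hav : MatchedPair D a v) (hmono : f a = f v) {c : Fin k}
    (hc : f a ≠ c) :
    {p : V × V | MatchedPair D p.1 p.2 ∧ update f v c p.1 = update f v c p.2}.ncard <
      {p : V × V | MatchedPair D p.1 p.2 ∧ f p.1 = f p.2}.ncard := by
  have hbi : update f v c a ≠ update f v c v := by simpa [hD.ne hav.arc] using hc
  refine Set.ncard_lt_ncard ?_ (Set.toFinite _)
  refine (Set.ssubset_iff_of_subset ?_).2 ⟨(a, v), ⟨hav, hmono⟩, fun h => hbi h.2⟩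
  rintro ⟨b, w⟩ ⟨hbw, heq⟩
  have hwv : w ≠ v := by
    rintro rfl
    exact hbi (hav.eq_of_arc_head hmin hbw.arc ▸ heq)
  have hbv : b ≠ v := hbw.tail_ne_head hmin hav
  exact ⟨hbw, by simpa [hwv, hbv] using heq⟩

theorem exists_splitsPairs_recolReachable [Finite V] [Nontrivial (Fin k)] (hD : Oriented D)
    (hmin : MinDegLEOne D) (hf : IsDicolouring D k f) :
    ∃ g, IsDicolouring D k g ∧ SplitsPairs D g ∧ RecolReachable D k f g := by
  classical
  refine exists_reflTransGen_of_measure_lt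
    (fun f => {p : V × V | MatchedPair D p.1 p.2 ∧ f p.1 = f p.2}.ncard) (fun f hf hsplit => ?_) hf
  obtain ⟨a, v, hav, hmono⟩ : ∃ a v, MatchedPair D a v ∧ f a = f v := by
    simpa [SplitsPairs] using hsplit
  obtain ⟨c, hc⟩ := exists_ne (f a)
  have hdic : IsDicolouring D k (update f v c) := by
    refine ((hf.isolate v).isolate_congr eqOn_update_compl).of_isolate fun w hw => ?_
    obtain rfl := hav.eq_of_arc_head hmin hw
    simpa [hD.ne hw] using hc.symm
  exact ⟨_, hdic, recolReachable_of_eqOn hf hdic eqOn_update_compl,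
    ncard_monochromatic_pairs_update_lt hD hmin hav hmono hc.symm⟩

theorem ncard_ne_lt [Finite V] {f' : V → Fin k} (hf' : ∀ u, f' u = f u ∨ f' u = g u)
    (hx : f x ≠ g x) (hx' : f' x = g x) : {u | f' u ≠ g u}.ncard < {u | f u ≠ g u}.ncard := by
  refine Set.ncard_lt_ncard ?_ (Set.toFinite _)
  refine (Set.ssubset_iff_of_subset fun u hu => ?_).2 ⟨x, hx, fun h => h hx'⟩
  simpa [← (hf' u).resolve_right hu] using hu

theorem SplitsPairs.update_of_not_isMatched [DecidableEq V] (hf : SplitsPairs D f)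
    (hx : ¬ IsMatched D x) (c : Fin k) : SplitsPairs D (update f x c) := by
  intro b w hbw
  have hb : b ≠ x := by rintro rfl; exact hx ⟨w, .inr hbw⟩
  have hw : w ≠ x := by rintro rfl; exact hx ⟨b, .inl hbw⟩
  simpa [hb, hw] using hf b w hbw

theorem SplitsPairs.update_update [DecidableEq V] (hD : Oriented D) (hmin : MinDegLEOne D)
    (hf : SplitsPairs D f) (hg : SplitsPairs D g) (hav : MatchedPair D a v) :
    SplitsPairs D (update (update f v (g v)) a (g a)) := by
  intro b w hbw
  by_cases hba : b = a
  · subst hba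
    obtain rfl := hav.eq_of_arc_tail hmin hbw.arc
    simpa [(hD.ne hav.arc).symm] using hg b w hav
  · obtain ⟨hbv, hwa, hwv⟩ := hav.disjoint hmin hbw hba
    simpa [hba, hbv, hwa, hwv] using hf b w hbw

theorem SplitsPairs.recolReachable_flip [Finite V] [DecidableEq V] (hD : Oriented D)
    (hmin : MinDegLEOne D) (hpm : PerfectlyMatched D) (hf : SplitsPairs D f)
    (hg : SplitsPairs D g) (hav : MatchedPair D a v) :
    RecolReachable D k f (update (update f v (g v)) a (g a)) := by
  have hdic := isDicolouring_of_forall_matchedPair_ne hD hmin hpm a fun b w h _ => hf b w h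
  have hdic₁ : IsDicolouring D k (update f v (g v)) := by
    refine isDicolouring_of_forall_matchedPair_ne hD hmin hpm a fun b w hbw hba => ?_
    obtain ⟨hbv, -, hwv⟩ := hav.disjoint hmin hbw hba
    simpa [hbv, hwv] using hf b w hbw
  have hdic₂ := isDicolouring_of_forall_matchedPair_ne hD hmin hpm a fun b w h _ =>
    hf.update_update hD hmin hg hav b w h
  exact .trans (recolReachable_of_eqOn hdic hdic₁ eqOn_update_compl)
    (recolReachable_of_eqOn hdic₁ hdic₂ eqOn_update_compl)

theorem SplitsPairs.exists_recolReachable_ncard_lt [Finite V] (hD : Oriented D)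
    (hmin : MinDegLEOne D) (hpm : PerfectlyMatched D) (hf : SplitsPairs D f)
    (hg : SplitsPairs D g) (hx : f x ≠ g x) :
    ∃ f', SplitsPairs D f' ∧ RecolReachable D k f f' ∧
      {u | f' u ≠ g u}.ncard < {u | f u ≠ g u}.ncard := by
  classical
  by_cases hmatched : IsMatched D x
  · obtain ⟨a, v, hav, hxav⟩ : ∃ a v, MatchedPair D a v ∧ (x = a ∨ x = v) := by
      obtain ⟨y, h | h⟩ := hmatched
      · exact ⟨y, x, h, .inr rfl⟩
      · exact ⟨x, y, h, .inl rfl⟩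
    refine ⟨_, hf.update_update hD hmin hg hav, hf.recolReachable_flip hD hmin hpm hg hav,
      ncard_ne_lt (fun u => ?_) hx ?_⟩ <;>
    grind
  · have hf' := hf.update_of_not_isMatched hmatched (g x)
    have isDicolouring {f : V → Fin k} (hf : SplitsPairs D f) : IsDicolouring D k f :=
      isDicolouring_of_forall_matchedPair_ne hD hmin hpm x fun b w h _ => hf b w h
    refine ⟨_, hf', recolReachable_of_eqOn (isDicolouring hf) (isDicolouring hf')
      eqOn_update_compl, ncard_ne_lt (fun u => ?_) hx (update_self ..)⟩
    grind

theorem SplitsPairs.recolReachable [Finite V] (hD : Oriented D) (hmin : MinDegLEOne D)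
    (hpm : PerfectlyMatched D) (hf : SplitsPairs D f) (hg : SplitsPairs D g) :
    RecolReachable D k f g := by
  obtain ⟨_, -, rfl, hfg⟩ := exists_reflTransGen_of_measure_lt (r := RecolStep D k)
    (P := SplitsPairs D) (Q := (· = g)) (fun f => {u | f u ≠ g u}.ncard)
    (fun f hf hne => by
      obtain ⟨x, hx⟩ := ne_iff.1 hne
      exact hf.exists_recolReachable_ncard_lt hD hmin hpm hg hx) hf
  exact hfg

theorem mixing_of_perfectlyMatched [Finite V] (hD : Oriented D) (hmin : MinDegLEOne D)
    (hpm : PerfectlyMatched D) (k : ℕ) : Mixing D k := by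
  intro α β hα hβ
  obtain _ | _ := subsingleton_or_nontrivial (Fin k)
  · rw [Subsingleton.elim α β]
  obtain ⟨α', -, hα', hαα'⟩ := exists_splitsPairs_recolReachable hD hmin hα
  obtain ⟨β', -, hβ', hββ'⟩ := exists_splitsPairs_recolReachable hD hmin hβ
  exact hαα'.trans ((hα'.recolReachable hD hmin hpm hβ').trans (recolReachable_symm hββ'))

theorem mixing_of_oriented [Finite V] (hD : Oriented D) (hmin : MinDegLEOne D) (k : ℕ) :
    Mixing D k := by
  induction D using isolateVertex_induction with
  | ind D ih =>
  by_cases hpm : PerfectlyMatched D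
  · exact mixing_of_perfectlyMatched hD hmin hpm k
  · obtain ⟨v, hv, hunmatched⟩ : ∃ v, NonIsolated D v ∧ ¬ IsMatched D v := by
      simpa [PerfectlyMatched] using hpm
    exact mixing_of_mixing_isolateVertex hD hmin hunmatched
      (ih v hv (hD.isolate v) (hmin.isolate v))

end PerfectlyMatched

theorem subcubic_two_mixing_iff_oriented_general {V : Type} [Finite V] (D : V → V → Prop)
    (hloopless : ∀ v, ¬ D v v) (hmin : MinDegLEOne D) : Mixing D 2 ↔ Oriented D :=
  ⟨oriented_of_mixing hloopless hmin, fun hD => mixing_of_oriented hD hmin 2⟩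

/-- A subcubic digraph is `2`-mixing if and only if it is an oriented graph,
i.e. contains no digon. -/
theorem subcubic_two_mixing_iff_oriented {V : Type} [Fintype V] (D : V → V → Prop)
    (hloopless : Irreflexive D)
    (hdeg : ∀ v : V, outDegOn D Set.univ v + inDegOn D Set.univ v ≤ 3) :
    Mixing D 2 ↔ Oriented D :=
  subcubic_two_mixing_iff_oriented_general D hloopless (minDegLEOne_of_degree_le_three hdeg)
end

section
/- For all positive integers k and ℓ, there exists a (k−1)-regular k-freezable undirected graph with girth at least ℓ. -/
/-- `α` is a proper `k`-colouring of the simple graph `G`. -/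
def IsProperColoring {V : Type} (G : SimpleGraph V) (k : ℕ) (α : V → Fin k) : Prop :=
  ∀ u v, G.Adj u v → α u ≠ α v

/-- A frozen `k`-colouring: no single vertex can be recoloured so as to yield
another proper `k`-colouring. -/
def FrozenColoring {V : Type} [DecidableEq V] (G : SimpleGraph V) (k : ℕ)
    (α : V → Fin k) : Prop :=
  IsProperColoring G k α ∧
    ∀ (v : V) (c : Fin k), c ≠ α v → ¬ IsProperColoring G k (Function.update α v c)

/-!
A covering of the complete graph on `k` vertices is `(k - 1)`-regular, and the covering map itself
is a frozen colouring, because around every vertex each of the other `k - 1` colours occurs. So it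
suffices to find finite coverings of arbitrarily large girth. Give the edges of a finite graph
involutions of a finite group `Γ` as voltages: in the covering by `V × Γ`, a cycle projects to a
walk without backtracking whose voltages multiply to `1`. Short cycles are therefore excluded as
soon as no short word without repeated adjacent letters is a relation among the voltages. Such
involutions are obtained by letting each letter act on the reduced words of length at most `L`,
by adding or cancelling it at the front: a reduced word sends the empty word to itself.
-/

open SimpleGraph

universe u

section ReducedWords

variable {E : Type u} {L : ℕ} {e : E} {l : List E}

/-- The words of length at most `L` in normal form for the free product of copies of `ℤ/2`
indexed by `E`, i.e. those without equal adjacent letters. -/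
def reducedWords (E : Type u) (L : ℕ) : Set (List E) :=
  {l | l.IsChain (· ≠ ·) ∧ l.length ≤ L}

theorem nil_mem_reducedWords : [] ∈ reducedWords E L :=
  ⟨.nil, Nat.zero_le L⟩

theorem cons_mem_reducedWords_iff :
    e :: l ∈ reducedWords E L ↔ l ∈ reducedWords E L ∧ l.head? ≠ some e ∧ l.length < L := by
  simp only [reducedWords, Set.mem_ofPred_eq, List.isChain_cons, List.length_cons, Option.mem_def]
  grind

theorem finite_reducedWords [Finite E] : (reducedWords E L).Finite :=
  (List.finite_length_le E L).subset fun _ hl => hl.2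

variable [DecidableEq E]

/-- Left multiplication of a word by the involutive letter `e`, truncated so that words of length
at most `L` are preserved: the words of length `L` not beginning with `e` are fixed. -/
def toggle (L : ℕ) (e : E) (l : List E) : List E :=
  if l.head? = some e then l.tail else if l.length < L then e :: l else l

theorem toggle_cons_self : toggle L e (e :: l) = l := by
  simp [toggle]

theorem toggle_of_cons_mem (h : e :: l ∈ reducedWords E L) : toggle L e l = e :: l := by
  obtain ⟨-, hhead, hlength⟩ := cons_mem_reducedWords_iff.1 h
  rw [toggle, if_neg hhead, if_pos hlength]

theorem exists_cons_eq_or_cons_mem_or_toggle_eq_self (e : E) (hl : l ∈ reducedWords E L) :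
    (∃ t, e :: t = l) ∨ e :: l ∈ reducedWords E L ∨ toggle L e l = l := by
  by_cases hhead : l.head? = some e
  · obtain ⟨t, rfl⟩ := List.head?_eq_some_iff.1 hhead
    exact .inl ⟨t, rfl⟩
  rcases lt_or_ge l.length L with hlength | hlength
  · exact .inr (.inl (cons_mem_reducedWords_iff.2 ⟨hl, hhead, hlength⟩))
  · exact .inr (.inr (by rw [toggle, if_neg hhead, if_neg hlength.not_gt]))

theorem toggle_mem_reducedWords (e : E) (hl : l ∈ reducedWords E L) :
    toggle L e l ∈ reducedWords E L := by
  rcases exists_cons_eq_or_cons_mem_or_toggle_eq_self e hl with ⟨t, rfl⟩ | hcons | hfix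
  · rw [toggle_cons_self]
    exact (cons_mem_reducedWords_iff.1 hl).1
  · rwa [toggle_of_cons_mem hcons]
  · rwa [hfix]

theorem toggle_toggle (e : E) (hl : l ∈ reducedWords E L) : toggle L e (toggle L e l) = l := by
  rcases exists_cons_eq_or_cons_mem_or_toggle_eq_self e hl with ⟨t, rfl⟩ | hcons | hfix
  · rw [toggle_cons_self, toggle_of_cons_mem hl]
  · rw [toggle_of_cons_mem hcons, toggle_cons_self]
  · rw [hfix, hfix]

/-- The permutation of the reduced words of length at most `L` by which the letter `e` acts. -/
def togglePerm (L : ℕ) (e : E) : Equiv.Perm (reducedWords E L) :=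
  Function.Involutive.toPerm
    (fun w => ⟨toggle L e w, toggle_mem_reducedWords e w.2⟩)
    fun w => Subtype.ext (toggle_toggle e w.2)

theorem togglePerm_mul_self (L : ℕ) (e : E) : togglePerm L e * togglePerm L e = 1 :=
  Equiv.ext (Function.Involutive.toPerm_involutive _)

theorem prod_map_togglePerm_apply_nil (hl : l ∈ reducedWords E L) :
    (l.map (togglePerm L)).prod ⟨[], nil_mem_reducedWords⟩ = ⟨l, hl⟩ := by
  induction l with
  | nil => rfl
  | cons e t ih =>
    rw [List.map_cons, List.prod_cons, Equiv.Perm.mul_apply,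
      ih (cons_mem_reducedWords_iff.1 hl).1]
    exact Subtype.ext (toggle_of_cons_mem hl)

end ReducedWords

theorem exists_finite_group_involutions_no_short_relation (E : Type u) [Finite E] (L : ℕ) :
    ∃ (Γ : Type u) (_ : Group Γ) (_ : Finite Γ) (σ : E → Γ), (∀ e, σ e * σ e = 1) ∧
      ∀ l : List E, l ≠ [] → l.IsChain (· ≠ ·) → l.length ≤ L → (l.map σ).prod ≠ 1 := by
  classical
  have : Finite (reducedWords E L) := finite_reducedWords.to_subtype
  refine ⟨Equiv.Perm (reducedWords E L), inferInstance, inferInstance, togglePerm L,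
    togglePerm_mul_self L, fun l hne hchain hlength hprod => hne ?_⟩
  have hl : l ∈ reducedWords E L := ⟨hchain, hlength⟩
  have hnil := prod_map_togglePerm_apply_nil hl
  rw [hprod, Equiv.Perm.one_apply, Subtype.mk.injEq] at hnil
  exact hnil.symm

section Coverings

variable {V W X : Type*} {G : SimpleGraph V} {H : SimpleGraph W} {K : SimpleGraph X}

theorem isChain_edges_map_of_isTrail {f : G →g H} (hf : ∀ v, Set.InjOn f (G.neighborSet v))
    {u v : V} {p : G.Walk u v} (hp : p.IsTrail) : (p.map f).edges.IsChain (· ≠ ·) := by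
  induction p with
  | nil => exact .nil
  | @cons u v _ huv q ih =>
    obtain ⟨hq, huv_notMem⟩ := (Walk.isTrail_cons huv q).1 hp
    cases q with
    | nil => simp
    | @cons _ w _ hvw r =>
      rw [Walk.map_cons, Walk.map_cons, Walk.edges_cons, Walk.edges_cons, List.isChain_cons_cons]
      refine ⟨fun hedge => huv_notMem ?_, ih hq⟩
      rw [Sym2.eq_swap, Sym2.congr_right] at hedge
      rw [hf v huv.symm hvw hedge, Sym2.eq_swap, Walk.edges_cons]
      exact List.mem_cons_self

/-- A graph homomorphism that is a covering map: it restricts to a bijection from the neighbours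
of each vertex to the neighbours of its image. Surjectivity on vertices is not required. -/
def IsCoveringHom (f : G →g H) : Prop :=
  ∀ v, Set.BijOn f (G.neighborSet v) (H.neighborSet (f v))

namespace IsCoveringHom

theorem comp_iso {g : H →g K} (hg : IsCoveringHom g) (e : G ≃g H) :
    IsCoveringHom (g.comp e.toHom) := by
  intro v
  have he : Set.BijOn e (G.neighborSet v) (H.neighborSet (e v)) :=
    e.toEquiv.bijOn fun _ => e.map_adj_iff
  exact (hg (e v)).comp he

theorem ncard_neighborSet {f : G →g H} (hf : IsCoveringHom f) (v : V) :
    (G.neighborSet v).ncard = (H.neighborSet (f v)).ncard := by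
  rw [← (hf v).image_eq, (hf v).injOn.ncard_image]

theorem frozenColoring {V : Type} [DecidableEq V] {G : SimpleGraph V} {k : ℕ}
    {f : G →g completeGraph (Fin k)} (hf : IsCoveringHom f) : FrozenColoring G k f := by
  refine ⟨fun _ _ huv => f.map_adj huv, fun v c hc hproper => ?_⟩
  obtain ⟨u, hvu, rfl⟩ := (hf v).surjOn hc.symm
  apply hproper v u hvu
  rw [Function.update_self, Function.update_of_ne hvu.ne']

end IsCoveringHom

end Coverings

section DerivedGraph

variable {V Γ : Type*} [Group Γ] {G : SimpleGraph V} {σ : Sym2 V → Γ} {hσ : ∀ e, σ e * σ e = 1}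

/-- The derived graph (voltage lift) of `G` with voltages `σ`. As the voltages are involutions,
they can be assigned to edges without choosing orientations. -/
def derivedGraph (G : SimpleGraph V) (σ : Sym2 V → Γ) (hσ : ∀ e, σ e * σ e = 1) :
    SimpleGraph (V × Γ) where
  Adj a b := G.Adj a.1 b.1 ∧ b.2 = a.2 * σ s(a.1, b.1)
  symm.symm a b := fun ⟨hadj, hb⟩ =>
    ⟨hadj.symm, by rw [hb, Sym2.eq_swap, mul_assoc, hσ, mul_one]⟩
  loopless.irrefl _ h := h.1.ne rfl

/-- The projection of the derived graph onto its base. -/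
def derivedGraphFst (G : SimpleGraph V) (σ : Sym2 V → Γ) (hσ : ∀ e, σ e * σ e = 1) :
    derivedGraph G σ hσ →g G where
  toFun := Prod.fst
  map_rel' h := h.1

theorem isCoveringHom_derivedGraphFst : IsCoveringHom (derivedGraphFst G σ hσ) := by
  refine fun a => ⟨fun _ hb => hb.1, fun b hb c hc hbc => ?_, fun v hv => ?_⟩
  · have hfst : b.1 = c.1 := hbc
    exact Prod.ext hfst (by rw [hb.2, hc.2, hfst])
  · exact ⟨(v, a.2 * σ s(a.1, v)), ⟨hv, rfl⟩, rfl⟩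

theorem snd_eq_mul_prod_voltages {a b : V × Γ} (p : (derivedGraph G σ hσ).Walk a b) :
    b.2 = a.2 * ((p.map (derivedGraphFst G σ hσ)).edges.map σ).prod := by
  induction p with
  | nil => simp
  | cons h p ih =>
    rw [ih, h.2, mul_assoc, Walk.map_cons, Walk.edges_cons, List.map_cons, List.prod_cons]
    rfl

theorem le_egirth_derivedGraph {L : ℕ}
    (hrel : ∀ l : List (Sym2 V), l ≠ [] → l.IsChain (· ≠ ·) → l.length < L → (l.map σ).prod ≠ 1) :
    L ≤ (derivedGraph G σ hσ).egirth := by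
  refine le_egirth.2 fun a p hp => Nat.cast_le.2 (le_of_not_gt fun hlt => ?_)
  let q := p.map (derivedGraphFst G σ hσ)
  have hlength : q.edges.length = p.length := by rw [Walk.length_edges, Walk.length_map]
  have hne : q.edges ≠ [] :=
    List.ne_nil_of_length_pos (by have := hp.three_le_length; lia)
  have hchain : q.edges.IsChain (· ≠ ·) :=
    isChain_edges_map_of_isTrail (fun v => (isCoveringHom_derivedGraphFst v).injOn) hp.isTrail
  exact hrel q.edges hne hchain (hlength ▸ hlt) (left_eq_mul.1 (snd_eq_mul_prod_voltages p))

end DerivedGraph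

theorem exists_finite_covering_le_egirth {V : Type u} [Finite V] (H : SimpleGraph V) (L : ℕ) :
    ∃ (W : Type u) (_ : Finite W) (G : SimpleGraph W) (f : G →g H),
      IsCoveringHom f ∧ Function.Surjective f ∧ L ≤ G.egirth := by
  obtain ⟨Γ, _, _, σ, hσ, hrel⟩ := exists_finite_group_involutions_no_short_relation (Sym2 V) L
  exact ⟨V × Γ, inferInstance, derivedGraph H σ hσ, derivedGraphFst H σ hσ,
    isCoveringHom_derivedGraphFst, Prod.fst_surjective,
    le_egirth_derivedGraph fun l hne hchain hlt => hrel l hne hchain hlt.le⟩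

/-- For all positive integers `k` and `ℓ`, there exists a (nonempty)
`(k-1)`-regular `k`-freezable graph with girth at least `ℓ`. -/
theorem exists_regular_freezable_high_girth (k ℓ : ℕ) (hk : 1 ≤ k) (hℓ : 1 ≤ ℓ) :
    ∃ (n : ℕ) (G : SimpleGraph (Fin n)),
      0 < n ∧
      (∀ v, (G.neighborSet v).ncard = k - 1) ∧
      (∀ (v : Fin n) (w : G.Walk v v), w.IsCycle → ℓ ≤ w.length) ∧
      ∃ α : Fin n → Fin k, FrozenColoring G k α := by
  obtain ⟨W, _, G, f, hf, hsurj, hgirth⟩ :=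
    exists_finite_covering_le_egirth (completeGraph (Fin k)) ℓ
  obtain ⟨n, ⟨φ⟩⟩ := Finite.exists_equiv_fin W
  let e : G.comap φ.symm ≃g G := Iso.comap φ.symm G
  have hcov : IsCoveringHom (f.comp e.toHom) := hf.comp_iso e
  refine ⟨n, G.comap φ.symm, ?_, fun v => ?_, fun v w hw => ?_, _, hcov.frozenColoring⟩
  · obtain ⟨w, -⟩ := hsurj ⟨0, hk⟩
    exact Fin.pos (φ w)
  · rw [hcov.ncard_neighborSet, Set.ncard_eq_toFinset_card', ← neighborFinset_def,
      card_neighborFinset_eq_degree, complete_graph_degree, Fintype.card_fin]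
  · rw [← e.egirth_eq] at hgirth
    exact Nat.cast_le.1 (hgirth.trans (egirth_le_length hw))
end

section
/- Let G be a (k−1)-regular undirected graph and α a frozen k-colouring of G. Then for every two colours i, j ∈ {1,…,k} there is a perfect matching in G between the vertices coloured i and the vertices coloured j; in particular all k colour classes of α have the same size. -/
/-!
In a frozen colouring every vertex sees all the colours other than its own, since a missing one
could be used to recolour it. With at most `k - 1` neighbours it sees each of them exactly once, so
`α` is a covering map from `G` to the complete graph on the colours. Under a covering map every edge
`ij` of the target lifts uniquely at each point over `i` and at each point over `j`; the lifted
edges form a perfect matching between the two fibres.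
-/

section Covering

variable {V W : Type*} {G : SimpleGraph V} {H : SimpleGraph W} {f : V → W}

/-- `f` is a covering map (a locally bijective homomorphism) of graphs: it sends the neighbours of
each vertex bijectively to the neighbours of its image. Surjectivity on vertices is not required. -/
def IsGraphCovering (G : SimpleGraph V) (H : SimpleGraph W) (f : V → W) : Prop :=
  ∀ v, Set.BijOn f (G.neighborSet v) (H.neighborSet (f v))

theorem IsGraphCovering.existsUnique_adj_of_adj (hf : IsGraphCovering G H f) {i j : W}
    (hij : H.Adj i j) (v : {v : V // f v = i}) : ∃! u : {u : V // f u = j}, G.Adj v u := by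
  obtain ⟨v, rfl⟩ := v
  obtain ⟨u, hvu, hu⟩ := (hf v).surjOn hij
  exact ⟨⟨u, hu⟩, hvu, fun w hvw =>
    Subtype.ext ((hf v).injOn hvw hvu (w.2.trans hu.symm))⟩

theorem IsGraphCovering.exists_equiv_fiber_adj (hf : IsGraphCovering G H f) {i j : W}
    (hij : H.Adj i j) :
    ∃ e : {v : V // f v = i} ≃ {v : V // f v = j}, ∀ v : {v : V // f v = i}, G.Adj v (e v) := by
  choose toFun adj_toFun toFun_unique using hf.existsUnique_adj_of_adj hij
  choose invFun adj_invFun invFun_unique using hf.existsUnique_adj_of_adj hij.symm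
  exact ⟨{ toFun, invFun
           left_inv := fun v => (invFun_unique _ v (adj_toFun v).symm).symm
           right_inv := fun u => (toFun_unique _ u (adj_invFun u).symm).symm }, adj_toFun⟩

end Covering

section Frozen

variable {V : Type} [DecidableEq V] {G : SimpleGraph V} {k : ℕ} {α : V → Fin k}

theorem IsProperColoring.update (hα : IsProperColoring G k α) {v : V} {c : Fin k}
    (hc : ∀ u, G.Adj v u → α u ≠ c) : IsProperColoring G k (Function.update α v c) := by
  intro a b hab
  rcases eq_or_ne a v with rfl | ha
  · rw [Function.update_self, Function.update_of_ne hab.ne']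
    exact (hc b hab).symm
  rcases eq_or_ne b v with rfl | hb
  · rw [Function.update_self, Function.update_of_ne ha]
    exact hc a hab.symm
  · rw [Function.update_of_ne ha, Function.update_of_ne hb]
    exact hα a b hab

theorem FrozenColoring.exists_adj_eq (hα : FrozenColoring G k α) {v : V} {c : Fin k}
    (hc : c ≠ α v) : ∃ u, G.Adj v u ∧ α u = c := by
  by_contra! hmissing
  exact hα.2 v c hc (hα.1.update hmissing)

theorem FrozenColoring.image_neighborSet (hα : FrozenColoring G k α) (v : V) :
    α '' G.neighborSet v = {α v}ᶜ := by
  refine Set.Subset.antisymm ?_ fun c hc => hα.exists_adj_eq hc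
  rintro _ ⟨u, hvu, rfl⟩
  exact (hα.1 v u hvu).symm

theorem FrozenColoring.injOn_neighborSet (hα : FrozenColoring G k α) {v : V}
    (hdeg : (G.neighborSet v).encard < k) : Set.InjOn α (G.neighborSet v) := by
  have hcolors : (α '' G.neighborSet v).encard + 1 = k := by
    rw [hα.image_neighborSet, add_comm, ← Set.encard_singleton (α v),
      Set.encard_add_encard_compl, Set.encard_univ, ENat.card_eq_coe_fintype_card,
      Fintype.card_fin]
  have hfinite : (G.neighborSet v).Finite := Set.encard_lt_top_iff.mp (hdeg.trans_le le_top)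
  refine hfinite.injOn_of_encard_image_eq ((Set.encard_image_le _ _).antisymm ?_)
  exact Order.le_of_lt_add_one (hcolors ▸ hdeg)

theorem FrozenColoring.isGraphCovering_top (hα : FrozenColoring G k α)
    (hdeg : ∀ v, (G.neighborSet v).encard < k) : IsGraphCovering G ⊤ α := by
  intro v
  have himage : α '' G.neighborSet v = (⊤ : SimpleGraph (Fin k)).neighborSet (α v) := by
    rw [hα.image_neighborSet]
    ext c
    exact ne_comm
  exact himage ▸ (hα.injOn_neighborSet (hdeg v)).bijOn_image

-- `encard`, because `ncard` would count an infinite neighbourhood or colour class as `0`.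
theorem frozen_coloring_perfect_matching_general (hα : FrozenColoring G k α)
    (hdeg : ∀ v, (G.neighborSet v).encard < k) :
    (∀ i j : Fin k, i ≠ j →
      ∃ e : {v : V // α v = i} ≃ {v : V // α v = j},
        ∀ v : {v : V // α v = i}, G.Adj v (e v)) ∧
    (∀ i j : Fin k, {v : V | α v = i}.encard = {v : V | α v = j}.encard) := by
  have hmatch {i j : Fin k} (hij : i ≠ j) :=
    (hα.isGraphCovering_top hdeg).exists_equiv_fiber_adj ((SimpleGraph.top_adj i j).mpr hij)
  refine ⟨fun i j => hmatch, fun i j => ?_⟩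
  rcases eq_or_ne i j with rfl | hij
  · rfl
  · obtain ⟨e, -⟩ := hmatch hij
    exact Set.encard_congr e

end Frozen

/-- In a `(k-1)`-regular graph with a frozen `k`-colouring `α`, between any two
distinct colour classes there is a perfect matching (a bijection matching each
vertex to an adjacent one); in particular all colour classes have equal size. -/
theorem frozen_coloring_perfect_matching {V : Type} [Fintype V] [DecidableEq V]
    (G : SimpleGraph V) (k : ℕ) (hk : 1 ≤ k)
    (hreg : ∀ v, (G.neighborSet v).ncard = k - 1)
    (α : V → Fin k) (hfrozen : FrozenColoring G k α) :
    (∀ i j : Fin k, i ≠ j →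
      ∃ e : {v : V // α v = i} ≃ {v : V // α v = j},
        ∀ v : {v : V // α v = i}, G.Adj v.1 (e v).1) ∧
    (∀ i j : Fin k, {v : V | α v = i}.ncard = {v : V | α v = j}.ncard) := by
  have hdeg (v : V) : (G.neighborSet v).encard < k := by
    rw [← (Set.toFinite _).cast_ncard_eq, hreg, Nat.cast_lt]
    exact Nat.sub_one_lt_of_lt hk
  exact (frozen_coloring_perfect_matching_general hfrozen hdeg).imp_right
    fun hcard i j => congrArg ENat.toNat (hcard i j)
end

section
/- Let G⃗ = (V, A) be an oriented graph. If G⃗ is 2-freezable, then |A| ≥ 2|V|. -/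
/-!
Fix a frozen `k`-dicolouring `α` with `k ≥ 2`. Recolouring `v` with `c ≠ α v` closes a directed
cycle through `v` whose other vertices have colour `c`. As there are no digons, that cycle has at
least three vertices, so `v` has an out-neighbour of colour `c` which is not a sink of its class;
moreover `v` has an in-neighbour of colour `c`. Now charge each arc to a pair in `V × Fin k`: its
tail with the colour of its head, except that an arc entering a sink of another class is charged to
its head with the colour of its head. Every pair is charged: `(v, c)` with `c ≠ α v` through the
out-neighbour above, and `(v, α v)` through an out-neighbour in the class of `v` or, if `v` is a
sink there, through an in-neighbour of another colour. Hence there are at least `k |V|` arcs.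
-/

section

open Relation Cardinal

theorem transGen_self_of_not_relAcyclic {V : Type} {r : V → V → Prop} {v : V}
    (havoid : RelAcyclic fun a b => r a b ∧ a ≠ v ∧ b ≠ v) (hr : ¬ RelAcyclic r) :
    TransGen r v v := by
  contrapose! hr with hv
  intro x hx
  have ne_v {y : V} (hxy : ReflTransGen r x y) (hyx : ReflTransGen r y x) : y ≠ v := by
    rintro rfl
    exact hv ((hx.trans_left hxy).trans_right hyx)
  have avoids_v {y : V} (hxy : TransGen r x y) (hyx : ReflTransGen r y x) :
      TransGen (fun a b => r a b ∧ a ≠ v ∧ b ≠ v) x y := by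
    induction hxy with
    | single hxb => exact .single ⟨hxb, ne_v .refl .refl, ne_v (.single hxb) hyx⟩
    | tail hxa hab ih =>
      have hax := hyx.head hab
      have hxa' := hxa.to_reflTransGen
      exact (ih hax).tail ⟨hab, ne_v hxa' hax, ne_v (hxa'.tail hab) hyx⟩
  exact havoid x (avoids_v hx .refl)

variable {V : Type} {D : V → V → Prop} {k : ℕ} {α : V → Fin k} {v : V} {c : Fin k}

theorem IsDicolouring.ne_of_arc {u : V} (hα : IsDicolouring D k α) (huv : D u v) : u ≠ v := by
  rintro rfl
  exact hα (α u) u (.single ⟨huv, rfl, rfl⟩)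

/-- A sink of the subdigraph induced by its own colour class. No arc leaving such a `v` can be
charged to `(v, α v)`, so an arc entering `v` has to be. -/
def IsClassSink (D : V → V → Prop) (α : V → Fin k) (v : V) : Prop :=
  ∀ w, D v w → α w ≠ α v

namespace FrozenDicolouring

variable [DecidableEq V]

theorem transGen_update_self (hα : FrozenDicolouring D k α) (hc : c ≠ α v) :
    TransGen (fun a b => D a b ∧ Function.update α v c a = c ∧ Function.update α v c b = c)
      v v := by
  obtain ⟨d, hd⟩ := not_forall.mp (hα.2 v c hc)
  have avoiding_v : RelAcyclic fun a b =>
      (D a b ∧ Function.update α v c a = d ∧ Function.update α v c b = d) ∧ a ≠ v ∧ b ≠ v := by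
    refine fun x hx => hα.1 d x (TransGen.mono ?_ x x hx)
    rintro a b ⟨⟨hab, ha, hb⟩, hav, hbv⟩
    rw [Function.update_of_ne hav] at ha
    rw [Function.update_of_ne hbv] at hb
    exact ⟨hab, ha, hb⟩
  have hcycle := transGen_self_of_not_relAcyclic avoiding_v hd
  obtain ⟨_, ⟨_, hvd, _⟩, _⟩ := TransGen.head'_iff.mp hcycle
  obtain rfl : c = d := by rwa [Function.update_self] at hvd
  exact hcycle

theorem exists_inNeighbor (hα : FrozenDicolouring D k α) (hc : c ≠ α v) :
    ∃ u, D u v ∧ α u = c := by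
  obtain ⟨u, _, huv, hu, _⟩ := TransGen.tail'_iff.mp (hα.transGen_update_self hc)
  rw [Function.update_of_ne (hα.1.ne_of_arc huv)] at hu
  exact ⟨u, huv, hu⟩

theorem exists_outNeighbor_not_isClassSink (hα : FrozenDicolouring D k α) (hD : Oriented D)
    (hc : c ≠ α v) : ∃ w, D v w ∧ α w = c ∧ ¬ IsClassSink D α w := by
  obtain ⟨w, ⟨hvw, _, hw⟩, hwv⟩ := TransGen.head'_iff.mp (hα.transGen_update_self hc)
  have hw_ne : w ≠ v := (hα.1.ne_of_arc hvw).symm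
  obtain rfl | ⟨u, ⟨hwu, _, hu⟩, _⟩ := hwv.cases_head
  · exact absurd rfl hw_ne
  have hu_ne : u ≠ v := by
    rintro rfl
    exact hD _ _ hvw hwu
  rw [Function.update_of_ne hw_ne] at hw
  rw [Function.update_of_ne hu_ne] at hu
  exact ⟨w, hvw, hw, fun hsink => hsink u hwu (hu.trans hw.symm)⟩

end FrozenDicolouring

open Classical in
/-- The pair of a vertex and a colour to which the arc `p = (tail, head)` is charged; also defined
when `p` is not an arc. -/
noncomputable def arcCharge (D : V → V → Prop) (α : V → Fin k) (p : V × V) : V × Fin k :=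
  if α p.1 ≠ α p.2 ∧ IsClassSink D α p.2 then (p.2, α p.2) else (p.1, α p.2)

theorem FrozenDicolouring.surjOn_arcCharge [DecidableEq V] (hα : FrozenDicolouring D k α)
    (hD : Oriented D) (hk : 2 ≤ k) : Set.SurjOn (arcCharge D α) (arcSet D) Set.univ := by
  rintro ⟨v, c⟩ -
  by_cases hc : c = α v
  · subst hc
    by_cases hsink : IsClassSink D α v
    · have : Nontrivial (Fin k) := Fin.nontrivial_iff_two_le.mpr hk
      obtain ⟨d, hd⟩ := exists_ne (α v)
      obtain ⟨u, huv, rfl⟩ := hα.exists_inNeighbor hd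
      exact ⟨(u, v), huv, if_pos ⟨hd, hsink⟩⟩
    · obtain ⟨w, hvw, hw⟩ : ∃ w, D v w ∧ α w = α v := by
        simpa [IsClassSink] using hsink
      exact ⟨(v, w), hvw, by simp [arcCharge, hw]⟩
  · obtain ⟨w, hvw, rfl, hw⟩ := hα.exists_outNeighbor_not_isClassSink hD hc
    exact ⟨(v, w), hvw, if_neg fun h => hw h.2⟩

theorem two_freezable_density_general [DecidableEq V] (hD : Oriented D) (hk : 2 ≤ k)
    (hfreeze : ∃ α : V → Fin k, FrozenDicolouring D k α) : k * #V ≤ #(arcSet D) := by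
  obtain ⟨α, hα⟩ := hfreeze
  calc (k : Cardinal) * #V = #(Set.univ : Set (V × Fin k)) := by simp [mul_comm]
    _ ≤ #(arcCharge D α '' arcSet D) := mk_le_mk_of_subset (hα.surjOn_arcCharge hD hk)
    _ ≤ #(arcSet D) := mk_image_le

end

/-- If an oriented graph is `2`-freezable, then it has at least `2 |V|` arcs. -/
theorem two_freezable_density {V : Type} [Fintype V] [DecidableEq V]
    (D : V → V → Prop) (horiented : Oriented D)
    (hfreeze : ∃ α : V → Fin 2, FrozenDicolouring D 2 α) :
    2 * Fintype.card V ≤ (arcSet D).ncard := by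
  have hcard := two_freezable_density_general horiented le_rfl hfreeze
  rw [← Set.cast_ncard (Set.toFinite _), Cardinal.mk_fintype] at hcard
  exact_mod_cast hcard
end

section
/- Let G be an undirected graph on n vertices, let k be the total number of colours, let L be a ⌈k/3⌉-feasible list assignment with lists contained in {1,…,k}, and let α be an L-colouring of G that avoids a set S of ⌈k/3⌉ colours. Then for any set S′ of ⌈k/3⌉ colours there is an L-colouring β of G that avoids S′ and a recolouring sequence from α to β in C(G, L) of length at most ((4k + 12)/3)·n. -/
/-- `α` is a proper colouring of `G` with `α v ∈ L v` for every vertex. -/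
def IsListColoring {V : Type} {k : ℕ} (G : SimpleGraph V) (L : V → Finset (Fin k))
    (α : V → Fin k) : Prop :=
  (∀ u v, G.Adj u v → α u ≠ α v) ∧ ∀ v, α v ∈ L v

/-!
Suppose first that `S` and `S'` are disjoint. Going through the vertices from last to first, move
each of them into `S` whenever some colour of `S` is available. A vertex `v` that stays outside `S`
then sees every colour of `S ∩ L v` on a later neighbour, so deleting `S` from the lists of these
vertices costs `v` no more colours than it loses later neighbours: the subgraph they induce is
still `a`-feasible. It uses at most `2a` colours, so every vertex in it has fewer than `a` later
neighbours. Under these two conditions any two list colourings are joined by a sequence that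
recolours each vertex at most `a` times: insert the vertices from last to first, and each time the
new vertex has to move, choose for it a colour that avoids the next `a` moves of its neighbours. A
greedy colouring avoiding `S'` is thus reached after at most `(a + 1) n` steps.

For general `S` and `S'`, either `S \ S'` is still large enough to play the role of `S`, or there
are enough colours outside `S ∪ S'` to pass through a third set.
-/

open Finset

namespace ListRecoloring

variable {V C : Type*} {G : SimpleGraph V} {L : V → Finset C} {P s : Finset V} {v w : V}
  {α β : V → C} {a q : ℕ} {l l₁ l₂ : List (V × C)}

/-- `α` is an `L`-colouring of the subgraph of `G` induced by `P`; the values of `α` outside `P`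
are irrelevant. -/
def IsListColoringOn (G : SimpleGraph V) (L : V → Finset C) (P : Finset V) (α : V → C) : Prop :=
  (∀ u ∈ P, ∀ v ∈ P, G.Adj u v → α u ≠ α v) ∧ ∀ v ∈ P, α v ∈ L v

theorem isListColoringOn_univ {V : Type} [Fintype V] {k : ℕ} {G : SimpleGraph V}
    {L : V → Finset (Fin k)} {α : V → Fin k} :
    IsListColoringOn G L univ α ↔ IsListColoring G L α := by
  simp [IsListColoringOn, IsListColoring]

namespace IsListColoringOn

theorem mono (h : IsListColoringOn G L P α) (hs : s ⊆ P) : IsListColoringOn G L s α :=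
  ⟨fun u hu v hv ↦ h.1 u (hs hu) v (hs hv), fun v hv ↦ h.2 v (hs hv)⟩

theorem congr (h : IsListColoringOn G L P α) (hαβ : ∀ v ∈ P, α v = β v) :
    IsListColoringOn G L P β := by
  refine ⟨fun u hu v hv huv ↦ ?_, fun v hv ↦ hαβ v hv ▸ h.2 v hv⟩
  rw [← hαβ u hu, ← hαβ v hv]
  exact h.1 u hu v hv huv

theorem insert_of_forall_ne [DecidableEq V] (h : IsListColoringOn G L s α) (hv : α v ∈ L v)
    (hadj : ∀ w ∈ s, G.Adj v w → α w ≠ α v) : IsListColoringOn G L (insert v s) α := by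
  refine ⟨fun x hx y hy hxy ↦ ?_, (forall_mem_insert ..).2 ⟨hv, h.2⟩⟩
  rcases mem_insert.1 hx with rfl | hxs <;> rcases mem_insert.1 hy with rfl | hys
  · exact absurd hxy G.irrefl
  · exact (hadj y hys hxy).symm
  · exact hadj x hxs hxy.symm
  · exact h.1 x hxs y hys hxy

theorem insert_update [DecidableEq V] {c : C} (h : IsListColoringOn G L s α) (hc : c ∈ L v)
    (hadj : ∀ w ∈ s, G.Adj v w → α w ≠ c) :
    IsListColoringOn G L (insert v s) (Function.update α v c) := by
  have hs : IsListColoringOn G L (s.erase v) (Function.update α v c) :=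
    (h.mono (erase_subset v s)).congr fun w hw ↦
      (Function.update_of_ne (ne_of_mem_erase hw) ..).symm
  rw [show insert v s = insert v (s.erase v) by grind]
  refine hs.insert_of_forall_ne (by simpa using hc) fun w hw hvw ↦ ?_
  simpa [Function.update_of_ne (ne_of_mem_erase hw)] using hadj w (mem_of_mem_erase hw) hvw

end IsListColoringOn

theorem exists_mem_forall_ne_of_card_lt [DecidableRel G.Adj] (α : V → C) (l : List (V × C))
    (h : #{w ∈ s | G.Adj v w} + (l.filter fun m ↦ G.Adj v m.1).length < #(L v)) :
    ∃ c ∈ L v, (∀ w ∈ s, G.Adj v w → α w ≠ c) ∧ ∀ m ∈ l, G.Adj v m.1 → m.2 ≠ c := by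
  classical
  let near : Finset C := {w ∈ s | G.Adj v w}.image α
  let next : Finset C := ((l.filter fun m ↦ G.Adj v m.1).map Prod.snd).toFinset
  have hnear : #near ≤ #{w ∈ s | G.Adj v w} := card_image_le
  have hnext : #next ≤ (l.filter fun m ↦ G.Adj v m.1).length :=
    (List.toFinset_card_le _).trans_eq (List.length_map _)
  have hcard : #(near ∪ next) < #(L v) := by grind [card_union_le near next]
  obtain ⟨c, hc, hc'⟩ := exists_mem_notMem_of_card_lt_card hcard
  refine ⟨c, hc, fun w hw hvw hwc ↦ hc' ?_, fun m hm hvm hmc ↦ hc' ?_⟩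
  · exact mem_union_left _ (mem_image.2 ⟨w, by simp [hw, hvw], hwc⟩)
  · exact mem_union_right _ (by simpa [next] using ⟨m.1, hmc ▸ hm, hvm⟩)

/-- The reconfiguration graph of the `L`-colourings of the subgraph induced by `P`; for `P = univ`
this is the graph `C(G, L)`. -/
def recoloringGraph (G : SimpleGraph V) (L : V → Finset C) (P : Finset V) :
    SimpleGraph {α : V → C // IsListColoringOn G L P α} where
  Adj α β := ∃ v, α.1 v ≠ β.1 v ∧ ∀ w, w ≠ v → α.1 w = β.1 w
  symm := ⟨fun _ _ ⟨v, hv, hw⟩ ↦ ⟨v, hv.symm, fun w h ↦ (hw w h).symm⟩⟩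
  loopless := ⟨fun _ ⟨_, hv, _⟩ ↦ hv rfl⟩

section Moves

variable [DecidableEq V]

/-- The colouring obtained from `α` by performing the moves of `l` in order, where the move
`(v, c)` gives colour `c` to `v`. -/
def recolor (α : V → C) (l : List (V × C)) : V → C :=
  l.foldl (fun α m ↦ Function.update α m.1 m.2) α

/-- The moves of `l`, started at `α`, form a recolouring sequence of the subgraph induced by `P`:
all colourings on the way are `L`-colourings of it. Moves that change nothing are allowed. -/
def IsRecoloringOn (G : SimpleGraph V) (L : V → Finset C) (P : Finset V) (α : V → C)
    (l : List (V × C)) : Prop :=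
  ∀ p, p <+: l → IsListColoringOn G L P (recolor α p)

theorem recolor_append : recolor α (l₁ ++ l₂) = recolor (recolor α l₁) l₂ :=
  List.foldl_append

theorem recolor_congr (h : α w = β w) (l : List (V × C)) : recolor α l w = recolor β l w := by
  induction l generalizing α β with
  | nil => exact h
  | cons _ _ ih => exact ih (by simp only [Function.update_apply, h])

theorem recolor_eq_or_mem (α : V → C) (l : List (V × C)) (w : V) :
    recolor α l w = α w ∨ (w, recolor α l w) ∈ l := by
  induction l generalizing α with
  | nil => exact .inl rfl
  | cons m l ih =>
    rcases ih (Function.update α m.1 m.2) with h | h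
    · by_cases hw : w = m.1
      · subst hw
        exact .inr (by simp_all [recolor])
      · exact .inl (h.trans (Function.update_of_ne hw ..))
    · exact .inr (List.mem_cons_of_mem _ h)

theorem recolor_of_forall_ne (α : V → C) (h : ∀ m ∈ l, m.1 ≠ w) : recolor α l w = α w :=
  (recolor_eq_or_mem α l w).resolve_right fun hw ↦ h _ hw rfl

theorem recolor_filter_ne (α : V → C) (l : List (V × C)) (hw : w ≠ v) :
    recolor α (l.filter fun m ↦ m.1 ≠ v) w = recolor α l w := by
  induction l generalizing α with
  | nil => rfl
  | cons m l ih =>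
    by_cases hm : m.1 = v
    · rw [List.filter_cons_of_neg (by simpa using hm), ih]
      exact recolor_congr (Function.update_of_ne (hm ▸ hw) ..).symm l
    · rw [List.filter_cons_of_pos (by simpa using hm)]
      exact ih _

theorem count_map_fst_filter_ne (l : List (V × C)) (hw : w ≠ v) :
    ((l.filter fun m ↦ m.1 ≠ v).map Prod.fst).count w = (l.map Prod.fst).count w := by
  simp only [List.count_eq_countP, List.countP_map, List.countP_filter]
  exact List.countP_congr fun m _ ↦ by grind

namespace IsRecoloringOn

theorem nil (h : IsListColoringOn G L P α) : IsRecoloringOn G L P α [] :=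
  fun _ hp ↦ List.prefix_nil.1 hp ▸ h

theorem head (h : IsRecoloringOn G L P α l) : IsListColoringOn G L P α :=
  h [] List.nil_prefix

theorem last (h : IsRecoloringOn G L P α l) : IsListColoringOn G L P (recolor α l) :=
  h l List.prefix_rfl

theorem append (h₁ : IsRecoloringOn G L P α l₁) (h₂ : IsRecoloringOn G L P (recolor α l₁) l₂) :
    IsRecoloringOn G L P α (l₁ ++ l₂) := by
  intro p hp
  rcases List.prefix_or_prefix_of_prefix hp (List.prefix_append l₁ l₂) with hp₁ | ⟨p₂, rfl⟩
  · exact h₁ p hp₁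
  · rw [recolor_append]
    exact h₂ p₂ ((List.prefix_append_right_inj l₁).1 hp)

theorem right_of_append (h : IsRecoloringOn G L P α (l₁ ++ l₂)) :
    IsRecoloringOn G L P (recolor α l₁) l₂ :=
  fun p hp ↦ by
    simpa only [recolor_append] using h (l₁ ++ p) ((List.prefix_append_right_inj l₁).2 hp)

theorem left_of_append (h : IsRecoloringOn G L P α (l₁ ++ l₂)) : IsRecoloringOn G L P α l₁ :=
  fun p hp ↦ h p (hp.trans (List.prefix_append ..))

theorem singleton {m : V × C} (h : IsListColoringOn G L P α)
    (h' : IsListColoringOn G L P (Function.update α m.1 m.2)) : IsRecoloringOn G L P α [m] := by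
  intro p hp
  rcases List.prefix_cons_iff.1 hp with rfl | ⟨t, rfl, ht⟩
  · exact h
  · exact List.prefix_nil.1 ht ▸ h'

theorem congr (h : IsRecoloringOn G L P α l) (hαβ : ∀ v ∈ P, α v = β v) :
    IsRecoloringOn G L P β l :=
  fun p hp ↦ (h p hp).congr fun v hv ↦ recolor_congr (hαβ v hv) p

theorem exists_walk (h : IsRecoloringOn G L P α l) :
    ∃ p : (recoloringGraph G L P).Walk ⟨α, h.head⟩ ⟨recolor α l, h.last⟩,
      p.length ≤ l.length := by
  induction l generalizing α with
  | nil => exact ⟨.nil, le_rfl⟩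
  | cons m l ih =>
    obtain ⟨p, hp⟩ := ih (right_of_append (l₁ := [m]) h)
    by_cases hm : α m.1 = m.2
    · have hα : Function.update α m.1 m.2 = α := by simp [← hm]
      refine ⟨p.copy (Subtype.ext hα) rfl, ?_⟩
      exact (SimpleGraph.Walk.length_copy ..).trans_le (hp.trans (Nat.le_succ _))
    · have hchange : (recoloringGraph G L P).Adj ⟨α, h.head⟩
          ⟨recolor α [m], (right_of_append (l₁ := [m]) h).head⟩ :=
        ⟨m.1, by simpa [recolor] using hm, fun w hw ↦ (Function.update_of_ne hw ..).symm⟩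
      exact ⟨.cons hchange p, Nat.succ_le_succ hp⟩

theorem insert_of_forall_ne (h : IsRecoloringOn G L s α l)
    (hα : IsListColoringOn G L (insert v s) α) (hl : ∀ m ∈ l, m.1 ≠ v)
    (hadj : ∀ m ∈ l, G.Adj v m.1 → m.2 ≠ α v) :
    IsRecoloringOn G L (insert v s) α l := by
  intro p hp
  have hv : recolor α p v = α v := recolor_of_forall_ne α fun m hm ↦ hl m (hp.subset hm)
  refine (h p hp).insert_of_forall_ne (hv ▸ hα.2 v (mem_insert_self v s)) fun w hw hvw ↦ ?_
  rw [hv]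
  rcases recolor_eq_or_mem α p w with hpw | hpw
  · rw [hpw]
    exact hα.1 w (mem_insert_of_mem hw) v (mem_insert_self v s) hvw.symm
  · exact hadj _ (hp.subset hpw) hvw

end IsRecoloringOn

end Moves

section BestChoice

variable [DecidableEq V] [DecidableRel G.Adj]

-- `l` is cut into `q` blocks containing at most `a` moves of neighbours of `v` each; at the start
-- of a block, `v` receives a colour that fits throughout the block.
theorem IsRecoloringOn.exists_insert (hl : IsRecoloringOn G L s α l)
    (hα : IsListColoringOn G L (insert v s) α) (hL : #{w ∈ s | G.Adj v w} + a < #(L v))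
    (hvs : v ∉ s) (hls : ∀ m ∈ l, m.1 ∈ s)
    (hlen : (l.filter fun m ↦ G.Adj v m.1).length ≤ q * a) :
    ∃ l', IsRecoloringOn G L (insert v s) α l' ∧ (l'.filter fun m ↦ m.1 ≠ v) = l ∧
      (l'.map Prod.fst).count v ≤ q := by
  have hv : ∀ m ∈ l, m.1 ≠ v := fun m hm ↦ ne_of_mem_of_not_mem (hls m hm) hvs
  induction q generalizing α l with
  | zero =>
    have hnil : ∀ m ∈ l, ¬ G.Adj v m.1 := by simpa [List.filter_eq_nil_iff] using hlen
    refine ⟨l, hl.insert_of_forall_ne hα hv fun m hm hvm ↦ absurd hvm (hnil m hm),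
      by simpa using hv, ?_⟩
    exact (List.count_eq_zero.2 (by simpa using fun c hc ↦ hv _ hc rfl)).le
  | succ q ih =>
    obtain ⟨l₁, l₂, rfl, hl₁, hl₂⟩ :=
      List.filter_eq_append_iff.1 (List.take_append_drop a (l.filter fun m ↦ G.Adj v m.1)).symm
    obtain ⟨c, hcL, hcs, hcl⟩ := exists_mem_forall_ne_of_card_lt (L := L) (s := s) α l₁
      (by rw [hl₁]; exact (Nat.add_le_add_left (List.length_take_le ..) _).trans_lt hL)
    have hmove : IsRecoloringOn G L (insert v s) α [(v, c)] :=
      .singleton hα ((hα.mono (subset_insert v s)).insert_update hcL hcs)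
    have hlc : IsRecoloringOn G L s (Function.update α v c) (l₁ ++ l₂) :=
      hl.congr fun w hw ↦ (Function.update_of_ne (ne_of_mem_of_not_mem hw hvs) ..).symm
    have hblock : IsRecoloringOn G L (insert v s) (Function.update α v c) l₁ :=
      hlc.left_of_append.insert_of_forall_ne hmove.last (fun m hm ↦ hv m (by simp [hm]))
        (by simpa using hcl)
    have hlen₂ : (l₂.filter fun m ↦ G.Adj v m.1).length ≤ q * a := by
      rw [hl₂, List.length_drop]
      exact Nat.sub_le_of_le_add (by simpa only [Nat.succ_mul] using hlen)
    obtain ⟨l', hl', hfilter, hcount⟩ := ih hlc.right_of_append hblock.last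
      (fun m hm ↦ hls m (by simp [hm])) hlen₂ (fun m hm ↦ hv m (by simp [hm]))
    refine ⟨[(v, c)] ++ (l₁ ++ l'), hmove.append (hblock.append hl'), ?_, ?_⟩
    · simp only [List.filter_append, hfilter]
      simpa using fun x c hm ↦ hv (x, c) (by simp [hm])
    · have h₁ : (l₁.map Prod.fst).count v = 0 :=
        List.count_eq_zero.2 (by simpa using fun c hc ↦ hv (v, c) (by simp [hc]) rfl)
      simp only [List.map_append, List.count_append, h₁]
      simpa [add_comm 1] using hcount

theorem length_le_card_mul_of_count_le {l : List V} (hl : ∀ v ∈ l, v ∈ s)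
    (hcount : ∀ v, l.count v ≤ a) : l.length ≤ #s * a :=
  calc l.length = ∑ v ∈ s, l.count v := by
        simpa using (Multiset.sum_count_eq_card (m := (l : Multiset V)) hl).symm
    _ ≤ #s * a := sum_le_card_nsmul s _ a fun v _ ↦ hcount v

theorem length_filter_adj_le (hl : ∀ m ∈ l, m.1 ∈ s)
    (hcount : ∀ u, (l.map Prod.fst).count u ≤ a) :
    (l.filter fun m ↦ G.Adj v m.1).length ≤ #{w ∈ s | G.Adj v w} * a := by
  have hmem : ∀ u ∈ (l.map Prod.fst).filter fun u ↦ G.Adj v u, u ∈ s.filter fun w ↦ G.Adj v w := by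
    simpa using fun u c hu hvu ↦ ⟨hl (u, c) hu, hvu⟩
  simpa [List.filter_map, Function.comp_def] using
    length_le_card_mul_of_count_le hmem fun u ↦ (List.filter_sublist.count_le u).trans (hcount u)

end BestChoice

section Feasible

/-- The neighbours of `v` in `P` that come after `v` in the given vertex ordering. -/
def laterNeighbors [LinearOrder V] (G : SimpleGraph V) [DecidableRel G.Adj] (P : Finset V)
    (v : V) : Finset V :=
  {w ∈ P | v < w ∧ G.Adj v w}

/-- The given vertex ordering witnesses that the restriction of `L` to the subgraph induced by `P`
is `a`-feasible. -/
def IsFeasibleOn [LinearOrder V] (G : SimpleGraph V) [DecidableRel G.Adj] (L : V → Finset C)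
    (P : Finset V) (a : ℕ) : Prop :=
  ∀ v ∈ P, #(laterNeighbors G P v) + 1 + a ≤ #(L v)

/-- `L` is an `a`-feasible list assignment of the finite graph `G`; the required ordering
`v₁, …, vₙ` of the vertices is encoded as a linear order. -/
def IsFeasible [Finite V] (G : SimpleGraph V) (L : V → Finset C) (a : ℕ) : Prop :=
  ∃ _ : LinearOrder V, ∀ v, {w | v < w ∧ G.Adj v w}.ncard + 1 + a ≤ #(L v)

theorem IsFeasible.of_equiv [Finite V] {ι : Type*} [LinearOrder ι] (e : ι ≃ V)
    (h : ∀ i, {j | i < j ∧ G.Adj (e i) (e j)}.ncard + 1 + a ≤ #(L (e i))) :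
    IsFeasible G L a := by
  refine ⟨LinearOrder.lift' e.symm e.symm.injective, fun v ↦ ?_⟩
  obtain ⟨i, rfl⟩ := e.surjective v
  convert h i using 3
  rw [← Set.ncard_preimage_of_injective_subset_range e.injective (by simp)]
  congr 1
  ext j
  change e.symm (e i) < e.symm (e j) ∧ _ ↔ _
  simp

variable [LinearOrder V] [DecidableRel G.Adj]

theorem laterNeighbors_subset_laterNeighbors (h : s ⊆ P) (v : V) :
    laterNeighbors G s v ⊆ laterNeighbors G P v :=
  filter_subset_filter _ h

theorem laterNeighbors_insert_self (h : ∀ w ∈ s, v < w) :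
    laterNeighbors G (insert v s) v = {w ∈ s | G.Adj v w} := by
  ext w
  simp only [laterNeighbors, mem_filter, mem_insert]
  grind

theorem IsFeasibleOn.mono (h : IsFeasibleOn G L P a) (hs : s ⊆ P) : IsFeasibleOn G L s a :=
  fun v hv ↦ le_trans (by gcongr; exact laterNeighbors_subset_laterNeighbors hs v) (h v (hs hv))

theorem IsFeasibleOn.exists_isListColoringOn [Nonempty (V → C)] (h : IsFeasibleOn G L P 0) :
    ∃ β, IsListColoringOn G L P β := by
  induction P using Finset.induction_on_min with
  | empty => exact ⟨Classical.arbitrary _, by simp, by simp⟩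
  | insert v s hvs ih =>
    obtain ⟨β, hβ⟩ := ih (h.mono (subset_insert v s))
    have hcard := h v (mem_insert_self v s)
    rw [laterNeighbors_insert_self hvs] at hcard
    obtain ⟨c, hcL, hcs, -⟩ := exists_mem_forall_ne_of_card_lt (G := G) (L := L) (s := s) β []
      (by simpa using hcard)
    exact ⟨_, hβ.insert_update hcL hcs⟩

theorem IsFeasibleOn.exists_recoloring (hL : IsFeasibleOn G L P a)
    (hdeg : ∀ v ∈ P, #(laterNeighbors G P v) < a) (hα : IsListColoringOn G L P α)
    (hβ : IsListColoringOn G L P β) :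
    ∃ l, IsRecoloringOn G L P α l ∧ (∀ m ∈ l, m.1 ∈ P) ∧ (∀ v ∈ P, recolor α l v = β v) ∧
      ∀ v, (l.map Prod.fst).count v ≤ a := by
  induction P using Finset.induction_on_min with
  | empty => exact ⟨[], .nil hα, by simp, by simp, by simp⟩
  | insert v s hvs ih =>
    have hs : s ⊆ insert v s := subset_insert v s
    have hne : ∀ w ∈ s, w ≠ v := fun w hw ↦ (hvs w hw).ne'
    obtain ⟨l, hl, hls, hlβ, hcount⟩ := ih (hL.mono hs)
      (fun w hw ↦ (card_le_card (laterNeighbors_subset_laterNeighbors hs w)).trans_lt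
        (hdeg w (hs hw))) (hα.mono hs) (hβ.mono hs)
    have hLv := hL v (mem_insert_self v s)
    have hdegv := hdeg v (mem_insert_self v s)
    rw [laterNeighbors_insert_self hvs] at hLv hdegv
    obtain ⟨l', hl', rfl, hcount'⟩ := hl.exists_insert hα (by omega)
      (fun hv ↦ hne v hv rfl) hls (length_filter_adj_le hls hcount)
    have hend : ∀ w ∈ insert v s, β w = Function.update (recolor α l') v (β v) w := by
      refine (forall_mem_insert ..).2 ⟨by simp, fun w hw ↦ ?_⟩
      rw [Function.update_of_ne (hne w hw), ← hlβ w hw, recolor_filter_ne α l' (hne w hw)]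
    refine ⟨l' ++ [(v, β v)], hl'.append (.singleton hl'.last (hβ.congr hend)), fun m hm ↦ ?_,
      fun w hw ↦ by rw [recolor_append, hend w hw]; rfl, fun w ↦ ?_⟩
    · by_cases hmv : m.1 = v
      · simp [hmv]
      · exact hs (hls m (by grind))
    · rw [List.map_append, List.count_append]
      by_cases hw : w = v
      · subst hw
        simpa using (Nat.succ_le_succ hcount').trans hdegv
      · rw [← count_map_fst_filter_ne l' hw]
        simpa [Ne.symm hw] using hcount w

end Feasible

section Avoid

variable [Fintype V] {R S' : Finset C}

theorem IsListColoringOn.of_sdiff [DecidableEq C] (hα : IsListColoringOn G L univ α)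
    (hβ : IsListColoringOn G (fun v ↦ L v \ R) {v | α v ∉ R} β)
    (hαβ : ∀ v, α v ∈ R → β v = α v) : IsListColoringOn G L univ β := by
  have hiff : ∀ v, β v ∈ R ↔ α v ∈ R := fun v ↦
    ⟨fun hv ↦ by_contra fun hαv ↦ (mem_sdiff.1 (hβ.2 v (by simpa using hαv))).2 hv,
      fun hv ↦ hαβ v hv ▸ hv⟩
  refine ⟨fun u _ v _ huv heq ↦ ?_, fun v _ ↦ ?_⟩
  · by_cases hu : α u ∈ R
    · have hv : α v ∈ R := (hiff v).1 (heq ▸ (hiff u).2 hu)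
      exact hα.1 u (mem_univ u) v (mem_univ v) huv (hαβ u hu ▸ hαβ v hv ▸ heq)
    · have hv : α v ∉ R := fun hv ↦ hu ((hiff u).1 (heq ▸ (hiff v).2 hv))
      exact hβ.1 u (by simpa using hu) v (by simpa using hv) huv heq
  · by_cases hv : α v ∈ R
    · exact hαβ v hv ▸ hα.2 v (mem_univ v)
    · exact (mem_sdiff.1 (hβ.2 v (by simpa using hv))).1

variable [LinearOrder V] [DecidableRel G.Adj]

theorem exists_recoloring_saturated [DecidableEq C] (hα : IsListColoringOn G L univ α)
    (hR : ∀ v, α v ∉ R) (P : Finset V) :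
    ∃ l, IsRecoloringOn G L univ α l ∧ l.length ≤ #P ∧ (∀ v ∉ P, recolor α l v ∉ R) ∧
      ∀ v ∈ P, recolor α l v ∈ R ∨ L v ∩ R ⊆ (laterNeighbors G univ v).image (recolor α l) := by
  induction P using Finset.induction_on_min with
  | empty => exact ⟨[], .nil hα, by simp, fun v _ ↦ hR v, by simp⟩
  | insert v s hvs ih =>
    obtain ⟨l, hl, hlen, hout, hsat⟩ := ih
    have hv : v ∉ s := fun hv ↦ (hvs v hv).false
    by_cases hfull : L v ∩ R ⊆ (laterNeighbors G univ v).image (recolor α l)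
    · exact ⟨l, hl, hlen.trans (card_le_card (subset_insert v s)),
        fun w hw ↦ hout w fun hws ↦ hw (mem_insert_of_mem hws),
        (forall_mem_insert ..).2 ⟨.inr hfull, hsat⟩⟩
    obtain ⟨c, hc, hfree⟩ := not_subset.1 hfull
    obtain ⟨hcL, hcR⟩ := mem_inter.1 hc
    have hadj : ∀ w ∈ univ, G.Adj v w → recolor α l w ≠ c := by
      rintro w - hvw rfl
      by_cases hws : w ∈ s
      · exact hfree (mem_image_of_mem _ (by simp [laterNeighbors, hvs w hws, hvw]))
      · exact hout w hws hcR
    have hmove : IsListColoringOn G L univ (Function.update (recolor α l) v c) := by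
      simpa using hl.last.insert_update hcL hadj
    have hne : ∀ w, v < w → recolor α (l ++ [(v, c)]) w = recolor α l w := fun w hw ↦ by
      rw [recolor_append]
      exact Function.update_of_ne hw.ne' ..
    refine ⟨l ++ [(v, c)], hl.append (.singleton hl.last hmove), ?_, fun w hw ↦ ?_,
      (forall_mem_insert ..).2 ⟨.inl ?_, fun w hw ↦ ?_⟩⟩
    · simpa [card_insert_of_notMem hv] using hlen
    · rw [mem_insert, not_or] at hw
      rw [recolor_append]
      simpa [recolor, Function.update_of_ne hw.1] using hout w hw.2
    · simpa [recolor_append, recolor] using hcR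
    · rw [hne w (hvs w hw), image_congr fun u hu ↦ hne u ((hvs w hw).trans (mem_filter.1 hu).2.1)]
      exact hsat w hw

theorem IsFeasibleOn.sdiff_of_saturated [DecidableEq C] (hL : IsFeasibleOn G L univ a)
    (hsat : ∀ v, α v ∈ R ∨ L v ∩ R ⊆ (laterNeighbors G univ v).image α) :
    IsFeasibleOn G (fun v ↦ L v \ R) {v | α v ∉ R} a := by
  intro v hv
  have hsub : L v ∩ R ⊆ {w ∈ laterNeighbors G univ v | α w ∈ R}.image α := by
    intro c hc
    obtain ⟨w, hw, rfl⟩ := mem_image.1 ((hsat v).resolve_left (by simpa using hv) hc)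
    exact mem_image_of_mem α (mem_filter.2 ⟨hw, mem_of_mem_inter_right hc⟩)
  have hlost : #(L v ∩ R) ≤ #{w ∈ laterNeighbors G univ v | α w ∈ R} :=
    (card_le_card hsub).trans card_image_le
  have hkept : laterNeighbors G {v | α v ∉ R} v = {w ∈ laterNeighbors G univ v | α w ∉ R} := by
    ext w
    simp only [laterNeighbors, mem_filter, mem_univ, true_and]
    tauto
  have hsplit := card_filter_add_card_filter_not (s := laterNeighbors G univ v) (α · ∈ R)
  have hlists := card_sdiff_add_card_inter (L v) R
  have hLv := hL v (mem_univ v)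
  grind

variable [Fintype C]

theorem exists_recoloring_avoiding_of_saturated [DecidableEq C] (hL : IsFeasibleOn G L univ a)
    (hα : IsListColoringOn G L univ α)
    (hsat : ∀ v, α v ∈ R ∨ L v ∩ R ⊆ (laterNeighbors G univ v).image α)
    (hRS' : Disjoint R S') (hS' : #S' ≤ a) (hC : Fintype.card C ≤ #R + 2 * a) :
    ∃ l, IsRecoloringOn G L univ α l ∧ l.length ≤ a * Fintype.card V ∧
      ∀ v, recolor α l v ∉ S' := by
  have hLR := hL.sdiff_of_saturated hsat
  have hdeg : ∀ v ∈ ({v | α v ∉ R} : Finset V), #(laterNeighbors G {v | α v ∉ R} v) < a := by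
    intro v hv
    have hcard : #(L v \ R) ≤ Fintype.card C - #R := by
      rw [← card_compl]
      exact card_le_card fun c hc ↦ mem_compl.2 (mem_sdiff.1 hc).2
    have hLv := hLR v hv
    grind
  have : Nonempty (V → C) := ⟨α⟩
  have hgreedy : IsFeasibleOn G (fun v ↦ (L v \ R) \ S') {v | α v ∉ R} 0 := by
    intro v hv
    have hLv := hLR v hv
    have hle := le_card_sdiff S' (L v \ R)
    grind
  obtain ⟨β, hβ⟩ := hgreedy.exists_isListColoringOn
  have hα' : IsListColoringOn G (fun v ↦ L v \ R) {v | α v ∉ R} α :=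
    ⟨(hα.mono (subset_univ _)).1, fun v hv ↦
      mem_sdiff.2 ⟨hα.2 v (mem_univ v), by simpa using hv⟩⟩
  have hβ' : IsListColoringOn G (fun v ↦ L v \ R) {v | α v ∉ R} β :=
    ⟨hβ.1, fun v hv ↦ (mem_sdiff.1 (hβ.2 v hv)).1⟩
  obtain ⟨l, hl, hmem, hlβ, hcount⟩ := hLR.exists_recoloring hdeg hα' hβ'
  have hfix : ∀ p, p <+: l → ∀ v, α v ∈ R → recolor α p v = α v := fun p hp v hv ↦
    recolor_of_forall_ne α fun m hm hmv ↦ by simpa [hmv, hv] using hmem m (hp.subset hm)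
  refine ⟨l, fun p hp ↦ hα.of_sdiff (hl p hp) (hfix p hp), ?_, fun v ↦ ?_⟩
  · simpa [mul_comm] using length_le_card_mul_of_count_le (fun v _ ↦ mem_univ v) hcount
  · by_cases hv : α v ∈ R
    · rw [hfix l List.prefix_rfl v hv]
      exact disjoint_left.1 hRS' hv
    · have hvH : v ∈ ({v | α v ∉ R} : Finset V) := by simpa using hv
      rw [hlβ v hvH]
      exact (mem_sdiff.1 (hβ.2 v hvH)).2

theorem exists_recoloring_avoiding_of_disjoint (hL : IsFeasibleOn G L univ a)
    (hα : IsListColoringOn G L univ α) (hR : ∀ v, α v ∉ R) (hRS' : Disjoint R S') (hS' : #S' ≤ a)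
    (hC : Fintype.card C ≤ #R + 2 * a) :
    ∃ l, IsRecoloringOn G L univ α l ∧ l.length ≤ (a + 1) * Fintype.card V ∧
      ∀ v, recolor α l v ∉ S' := by
  classical
  obtain ⟨l₁, hl₁, hlen₁, -, hsat⟩ := exists_recoloring_saturated hα hR univ
  obtain ⟨l₂, hl₂, hlen₂, havoid⟩ := exists_recoloring_avoiding_of_saturated hL hl₁.last
    (fun v ↦ hsat v (mem_univ v)) hRS' hS' hC
  refine ⟨l₁ ++ l₂, hl₁.append hl₂, ?_, by simpa only [recolor_append] using havoid⟩
  rw [List.length_append, add_one_mul, add_comm]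
  exact add_le_add hlen₂ hlen₁

theorem exists_recoloring_avoiding {S : Finset C} (hL : IsFeasibleOn G L univ a)
    (hα : IsListColoringOn G L univ α) (hC : Fintype.card C ≤ 3 * a) (hS : a ≤ #S)
    (hαS : ∀ v, α v ∉ S) (hS' : #S' ≤ a) :
    ∃ l, IsRecoloringOn G L univ α l ∧ l.length ≤ 2 * (a + 1) * Fintype.card V ∧
      ∀ v, recolor α l v ∉ S' := by
  classical
  by_cases hlarge : Fintype.card C ≤ #(S \ S') + 2 * a
  · obtain ⟨l, hl, hlen, havoid⟩ := exists_recoloring_avoiding_of_disjoint hL hα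
      (fun v hv ↦ hαS v (mem_sdiff.1 hv).1) sdiff_disjoint hS' hlarge
    exact ⟨l, hl, hlen.trans (Nat.mul_le_mul_right _ (by omega)), havoid⟩
  obtain ⟨X, hX, hXcard⟩ : ∃ X ⊆ (S ∪ S')ᶜ, #X = a := by
    have hunion := card_sdiff_add_card S S'
    exact exists_subset_card_eq (by rw [card_compl]; omega)
  obtain ⟨hSX, hS'X⟩ := disjoint_union_left.1 (disjoint_compl_right.mono_right hX)
  obtain ⟨l₁, hl₁, hlen₁, havoid₁⟩ :=
    exists_recoloring_avoiding_of_disjoint hL hα hαS hSX hXcard.le (by omega)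
  obtain ⟨l₂, hl₂, hlen₂, havoid₂⟩ :=
    exists_recoloring_avoiding_of_disjoint hL hl₁.last havoid₁ hS'X.symm hS' (by omega)
  refine ⟨l₁ ++ l₂, hl₁.append hl₂, ?_, by simpa only [recolor_append] using havoid₂⟩
  rw [List.length_append, mul_assoc, two_mul]
  exact add_le_add hlen₁ hlen₂

end Avoid

end ListRecoloring

open ListRecoloring

theorem avoid_colours_recolouring_general {V C : Type*} [Fintype V] [Fintype C]
    {G : SimpleGraph V} {L : V → Finset C} {a : ℕ} (hL : IsFeasible G L a)
    (hC : Fintype.card C ≤ 3 * a) (α : {α : V → C // IsListColoringOn G L univ α})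
    {S S' : Finset C} (hS : a ≤ #S) (hαS : ∀ v, α.1 v ∉ S) (hS' : #S' ≤ a) :
    ∃ (β : {β : V → C // IsListColoringOn G L univ β}) (p : (recoloringGraph G L univ).Walk α β),
      (∀ v, β.1 v ∉ S') ∧ p.length ≤ 2 * (a + 1) * Fintype.card V := by
  classical
  obtain ⟨_, hL⟩ := hL
  have hL' : IsFeasibleOn G L univ a := fun v _ ↦ by
    simpa [laterNeighbors, ← Set.ncard_coe_finset] using hL v
  obtain ⟨l, hl, hlen, havoid⟩ := exists_recoloring_avoiding hL' α.2 hC hS hαS hS'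
  obtain ⟨p, hp⟩ := hl.exists_walk
  exact ⟨_, p, havoid, hp.trans hlen⟩

/-- Given a graph `G` on `n` vertices, `k` colours, a `⌈k/3⌉`-feasible list
assignment `L` and an `L`-colouring `α` avoiding a set `S` of `⌈k/3⌉` colours,
for any set `S'` of `⌈k/3⌉` colours there is an `L`-colouring `β` avoiding `S'`
and a recolouring sequence from `α` to `β` of length at most `((4k+12)/3) n`. -/
theorem avoid_colours_recolouring (n k : ℕ) (G : SimpleGraph (Fin n))
    (L : Fin n → Finset (Fin k))
    (hfeasible : ∃ e : Fin n ≃ Fin n, ∀ i : Fin n,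
      {j : Fin n | i < j ∧ G.Adj (e i) (e j)}.ncard + 1 + (k + 2) / 3 ≤ (L (e i)).card)
    (α : Fin n → Fin k) (hα : IsListColoring G L α)
    (S : Finset (Fin k)) (hScard : S.card = (k + 2) / 3) (havoid : ∀ v, α v ∉ S)
    (S' : Finset (Fin k)) (hS'card : S'.card = (k + 2) / 3) :
    ∃ (β : Fin n → Fin k) (m : ℕ) (γ : ℕ → Fin n → Fin k),
      (∀ v, β v ∉ S') ∧
      γ 0 = α ∧ γ m = β ∧
      (∀ i ≤ m, IsListColoring G L (γ i)) ∧
      (∀ i < m, ∃ v, γ i v ≠ γ (i + 1) v ∧ ∀ w, w ≠ v → γ i w = γ (i + 1) w) ∧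
      3 * m ≤ (4 * k + 12) * n := by
  have hα' : IsListColoringOn G L univ α := isListColoringOn_univ.2 hα
  obtain ⟨e, he⟩ := hfeasible
  obtain ⟨β, p, hβ, hp⟩ := avoid_colours_recolouring_general (.of_equiv e he)
    (by rw [Fintype.card_fin]; omega) ⟨α, hα'⟩ hScard.ge havoid hS'card.le
  refine ⟨β, p.length, fun i ↦ p.getVert i, hβ, by simp, by simp,
    fun i _ ↦ isListColoringOn_univ.1 (p.getVert i).2, fun i hi ↦ p.adj_getVert_succ hi, ?_⟩
  calc 3 * p.length ≤ 3 * (2 * ((k + 2) / 3 + 1) * n) := by simpa using hp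
    _ = (6 * ((k + 2) / 3 + 1)) * n := by ring
    _ ≤ (4 * k + 12) * n := Nat.mul_le_mul_right n (by omega)
end

section
/- For every integer k ≥ 0, the oriented graph B⃗_k is k-out-degenerate and has dichromatic number exactly k + 1, where B⃗_0 is the single-vertex oriented graph and, for k ≥ 1, B⃗_k is obtained from two disjoint copies B⃗¹ and B⃗² of B⃗_{k−1} and one new vertex r by adding all arcs from r to B⃗¹, all arcs from B⃗¹ to B⃗², and all arcs from B⃗² to r. -/
/-- The vertex set of the oriented graph `B⃗_k`: `B⃗_0` is a single vertex and
`B⃗_{k+1}` consists of two disjoint copies of `B⃗_k` together with a new vertex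
`r` (encoded as `none`). -/
def Bvert : ℕ → Type
  | 0 => PUnit
  | k + 1 => Option (Bvert k ⊕ Bvert k)

/-- The arcs of `B⃗_k`: in `B⃗_{k+1}`, all arcs from `r` to the first copy, from
the first copy to the second, and from the second copy to `r`, together with the
arcs inside the two copies. -/
def Barc : (k : ℕ) → Bvert k → Bvert k → Prop
  | 0 => fun _ _ => False
  | k + 1 => fun a b =>
      match a, b with
      | none, some (Sum.inl _) => True
      | some (Sum.inl x), some (Sum.inl y) => Barc k x y
      | some (Sum.inl _), some (Sum.inr _) => True
      | some (Sum.inr x), some (Sum.inr y) => Barc k x y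
      | some (Sum.inr _), none => True
      | _, _ => False

/-!
Everything is propagated along one step of the construction, applied to arbitrary digraphs `D` and
`E`: the cyclic join with arcs `r → D → E → r`.

* Out-degeneracy: only the arc to `r` is added to the out-degree of a vertex of `E`, so a vertex set
  meeting `E` has a vertex of small out-degree there; failing that, one in `D`; failing that, the
  set is `{r}`.
* Upper bound: if `r` gets a colour of its own, the monochromatic arcs all respect the order
  `r, D, E`, so no monochromatic cycle leaves `D` or `E`.
* Lower bound: if the colour of `r` occurs in both `D` and `E`, there is a monochromatic directed
  triangle; otherwise `D` or `E` is coloured with one colour less.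
-/

theorem RelAcyclic.of_relHom {V W : Type} {r : V → V → Prop} {s : W → W → Prop}
    (hs : RelAcyclic s) (f : r →r s) : RelAcyclic r :=
  fun v hv => hs (f v) (Relation.TransGen.lift f (fun _ _ => f.map_rel) v v hv)

theorem relAcyclic_of_forall_not {V : Type} {r : V → V → Prop} (h : ∀ u v, ¬ r u v) :
    RelAcyclic r := by
  intro v hv
  obtain ⟨w, hvw, -⟩ := Relation.TransGen.head'_iff.mp hv
  exact h v w hvw

theorem RelAcyclic.sumLex {V W : Type} {r : V → V → Prop} {s : W → W → Prop}
    (hr : RelAcyclic r) (hs : RelAcyclic s) : RelAcyclic (Sum.Lex r s) := by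
  intro v hv
  have closure_le : Relation.TransGen (Sum.Lex r s) ≤
      Sum.Lex (Relation.TransGen r) (Relation.TransGen s) :=
    Relation.transGen_minimal fun _ _ => Sum.Lex.mono (fun _ _ => .single) (fun _ _ => .single)
  rcases closure_le v v hv with hv | hv
  exacts [hr _ hv, hs _ hv]

/-- The monochromatic arcs of `D` under the colouring `α`. They allow dicolourings to be studied
without treating the colour classes one at a time. -/
def MonoArc {V C : Type} (D : V → V → Prop) (α : V → C) (u v : V) : Prop :=
  D u v ∧ α u = α v

theorem isDicolouring_iff_relAcyclic_monoArc {V : Type} {D : V → V → Prop} {k : ℕ}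
    {α : V → Fin k} : IsDicolouring D k α ↔ RelAcyclic (MonoArc D α) := by
  constructor
  · intro hα v hv
    have walk_mem_class : ∀ w, Relation.TransGen (MonoArc D α) v w →
        α w = α v ∧ Relation.TransGen (fun x y => D x y ∧ α x = α v ∧ α y = α v) v w := by
      intro w hw
      induction hw with
      | single hvw => exact ⟨hvw.2.symm, .single ⟨hvw.1, rfl, hvw.2.symm⟩⟩
      | tail _ hxy ih =>
        have hy := hxy.2.symm.trans ih.1
        exact ⟨hy, ih.2.tail ⟨hxy.1, ih.1, hy⟩⟩
    exact hα (α v) v (walk_mem_class v hv).2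
  · intro hα c
    exact hα.of_relHom ⟨id, fun ⟨hxy, hx, hy⟩ => ⟨hxy, hx.trans hy.symm⟩⟩

/-- `D` admits a `k`-dicolouring, that is, its dichromatic number is at most `k`. -/
def Dicolourable {V : Type} (D : V → V → Prop) (k : ℕ) : Prop :=
  ∃ α : V → Fin k, IsDicolouring D k α

theorem IsDicolouring.of_relHom {V W : Type} {D : V → V → Prop} {E : W → W → Prop} {k l : ℕ}
    {α : V → Fin k} {β : W → Fin l} (hα : IsDicolouring D k α) (f : E →r D)
    (hβ : ∀ u v, β u = β v → α (f u) = α (f v)) : IsDicolouring E l β :=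
  isDicolouring_iff_relAcyclic_monoArc.mpr <|
    (isDicolouring_iff_relAcyclic_monoArc.mp hα).of_relHom
      ⟨f, fun {u v} huv => ⟨f.map_rel huv.1, hβ u v huv.2⟩⟩

theorem IsDicolouring.dicolourable_of_relHom_of_forall_ne {V W : Type} {D : V → V → Prop}
    {E : W → W → Prop} {k : ℕ} {α : V → Fin (k + 1)} (hα : IsDicolouring D (k + 1) α)
    (f : E →r D) {c : Fin (k + 1)} (hc : ∀ w, α (f w) ≠ c) : Dicolourable E k := by
  choose β hβ using fun w => Fin.exists_succAbove_eq (hc w)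
  exact ⟨β, hα.of_relHom f fun u v huv => by rw [← hβ u, ← hβ v, huv]⟩

/-- `D` is `d`-out-degenerate. Only induced subdigraphs are considered, since deleting arcs does not
increase out-degrees. As `Set.ncard` is `0` on infinite sets, a vertex of infinite out-degree counts
as a vertex of out-degree `0`. -/
def OutDegenerate {V : Type} (D : V → V → Prop) (d : ℕ) : Prop :=
  ∀ S : Set V, S.Nonempty → ∃ v ∈ S, outDegOn D S v ≤ d

theorem OutDegenerate.mono {V : Type} {D : V → V → Prop} {d e : ℕ} (hD : OutDegenerate D d)
    (hde : d ≤ e) : OutDegenerate D e := by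
  intro S hS
  obtain ⟨v, hvS, hv⟩ := hD S hS
  exact ⟨v, hvS, hv.trans hde⟩

theorem outDegOn_eq_zero {V : Type} {D : V → V → Prop} {S : Set V} {v : V}
    (h : ∀ w ∈ S, ¬ D v w) : outDegOn D S v = 0 := by
  have no_out_neighbour : {w ∈ S | D v w} = ∅ :=
    Set.eq_empty_of_forall_notMem fun w hw => h w hw.1 hw.2
  rw [outDegOn, no_out_neighbour, Set.ncard_empty]

/-- The cyclic join of `D` and `E`: their disjoint union together with a new vertex `r = none`, all
arcs from `r` to `D`, all arcs from `D` to `E` and all arcs from `E` to `r`. -/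
inductive CyclicJoin {V W : Type} (D : V → V → Prop) (E : W → W → Prop) :
    Option (V ⊕ W) → Option (V ⊕ W) → Prop
  | root_left (v : V) : CyclicJoin D E none (some (.inl v))
  | left {v v' : V} (h : D v v') : CyclicJoin D E (some (.inl v)) (some (.inl v'))
  | left_right (v : V) (w : W) : CyclicJoin D E (some (.inl v)) (some (.inr w))
  | right {w w' : W} (h : E w w') : CyclicJoin D E (some (.inr w)) (some (.inr w'))
  | right_root (w : W) : CyclicJoin D E (some (.inr w)) none

namespace CyclicJoin

variable {V W : Type} {D : V → V → Prop} {E : W → W → Prop}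

theorem oriented (hD : Oriented D) (hE : Oriented E) : Oriented (CyclicJoin D E) := by
  intro x y hxy hyx
  cases hxy with
  | left huv => cases hyx with | left hvu => exact hD _ _ huv hvu
  | right huv => cases hyx with | right hvu => exact hE _ _ huv hvu
  | _ => cases hyx

/-- The inclusion of `D` into the cyclic join of `D` and `E`. -/
def inl (D : V → V → Prop) (E : W → W → Prop) : D →r CyclicJoin D E :=
  ⟨fun v => some (.inl v), .left⟩

/-- The inclusion of `E` into the cyclic join of `D` and `E`. -/
def inr (D : V → V → Prop) (E : W → W → Prop) : E →r CyclicJoin D E :=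
  ⟨fun w => some (.inr w), .right⟩

theorem inl_injective : Function.Injective (inl D E) :=
  (Option.some_injective _).comp Sum.inl_injective

theorem inr_injective : Function.Injective (inr D E) :=
  (Option.some_injective _).comp Sum.inr_injective

theorem outDegOn_inl {S : Set (Option (V ⊕ W))} (hS : ∀ w, inr D E w ∉ S) (v : V) :
    outDegOn (CyclicJoin D E) S (inl D E v) = outDegOn D (inl D E ⁻¹' S) v := by
  have out_neighbours : {x ∈ S | CyclicJoin D E (inl D E v) x} =
      inl D E '' {u ∈ inl D E ⁻¹' S | D v u} := by
    ext x
    constructor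
    · rintro ⟨hxS, hvx⟩
      cases hvx with
      | left hvu => exact ⟨_, ⟨hxS, hvu⟩, rfl⟩
      | left_right _ w => exact absurd hxS (hS w)
    · rintro ⟨u, ⟨huS, hvu⟩, rfl⟩
      exact ⟨huS, .left hvu⟩
  rw [outDegOn, out_neighbours, Set.ncard_image_of_injective _ inl_injective, outDegOn]

theorem outDegOn_inr_le (S : Set (Option (V ⊕ W))) (w : W) :
    outDegOn (CyclicJoin D E) S (inr D E w) ≤ outDegOn E (inr D E ⁻¹' S) w + 1 := by
  have out_neighbours : {x ∈ S | CyclicJoin D E (inr D E w) x} \ {none} =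
      inr D E '' {u ∈ inr D E ⁻¹' S | E w u} := by
    ext x
    constructor
    · rintro ⟨⟨hxS, hwx⟩, hx⟩
      cases hwx with
      | right hwu => exact ⟨_, ⟨hxS, hwu⟩, rfl⟩
      | right_root => exact absurd rfl hx
    · rintro ⟨u, ⟨huS, hwu⟩, rfl⟩
      exact ⟨⟨huS, .right hwu⟩, Option.some_ne_none _⟩
  rw [← tsub_le_iff_right]
  calc outDegOn (CyclicJoin D E) S (inr D E w) - 1
      ≤ ({x ∈ S | CyclicJoin D E (inr D E w) x} \ {none}).ncard :=
        Set.pred_ncard_le_ncard_sdiff_singleton _ _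
    _ = outDegOn E (inr D E ⁻¹' S) w := by
        rw [out_neighbours, Set.ncard_image_of_injective _ inr_injective, outDegOn]

theorem outDegenerate {d : ℕ} (hD : OutDegenerate D (d + 1)) (hE : OutDegenerate E d) :
    OutDegenerate (CyclicJoin D E) (d + 1) := by
  intro S hS
  by_cases hSE : (inr D E ⁻¹' S).Nonempty
  · obtain ⟨w, hwS, hw⟩ := hE _ hSE
    exact ⟨inr D E w, hwS, (outDegOn_inr_le S w).trans (Nat.add_le_add_right hw 1)⟩
  have inr_notMem : ∀ w, inr D E w ∉ S := fun w hw => hSE ⟨w, hw⟩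
  by_cases hSD : (inl D E ⁻¹' S).Nonempty
  · obtain ⟨v, hvS, hv⟩ := hD _ hSD
    exact ⟨inl D E v, hvS, (outDegOn_inl inr_notMem v).trans_le hv⟩
  have inl_notMem : ∀ v, inl D E v ∉ S := fun v hv => hSD ⟨v, hv⟩
  obtain ⟨_ | v | w, hxS⟩ := hS
  · refine ⟨none, hxS, (outDegOn_eq_zero ?_).trans_le (Nat.zero_le _)⟩
    rintro _ hvS ⟨v⟩
    exact inl_notMem v hvS
  · exact absurd hxS (inl_notMem v)
  · exact absurd hxS (inr_notMem w)

/-- The colouring of the cyclic join that extends colourings of `D` and `E` with `k` common colours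
by giving `r` a new colour, encoded as the last one. -/
def colouring {k : ℕ} (α : V → Fin k) (β : W → Fin k) (x : Option (V ⊕ W)) : Fin (k + 1) :=
  x.elim (Fin.last k) fun y => (Sum.elim α β y).castSucc

/-- The map from the cyclic join to the ordered sum of `{r}`, `D` and `E`. -/
def toSum (x : Option (V ⊕ W)) : Unit ⊕ (V ⊕ W) :=
  x.elim (.inl ()) .inr

theorem sumLex_of_monoArc_colouring {k : ℕ} {α : V → Fin k} {β : W → Fin k}
    {x y : Option (V ⊕ W)} (hxy : MonoArc (CyclicJoin D E) (colouring α β) x y) :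
    Sum.Lex (fun _ _ => False) (Sum.Lex (MonoArc D α) (MonoArc E β)) (toSum x) (toSum y) := by
  obtain ⟨hxy, hcol⟩ := hxy
  cases hxy with
  | root_left v => exact .sep _ _
  | left hvv' => exact .inr (.inl ⟨hvv', Fin.castSucc_injective k hcol⟩)
  | left_right v w => exact .inr (.sep v w)
  | right hww' => exact .inr (.inr ⟨hww', Fin.castSucc_injective k hcol⟩)
  | right_root w => exact absurd hcol (Fin.castSucc_ne_last _)

theorem dicolourable {k : ℕ} (hD : Dicolourable D k) (hE : Dicolourable E k) :
    Dicolourable (CyclicJoin D E) (k + 1) := by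
  obtain ⟨α, hα⟩ := hD
  obtain ⟨β, hβ⟩ := hE
  rw [isDicolouring_iff_relAcyclic_monoArc] at hα hβ
  refine ⟨colouring α β, isDicolouring_iff_relAcyclic_monoArc.mpr ?_⟩
  exact ((relAcyclic_of_forall_not fun _ _ => not_false).sumLex (hα.sumLex hβ)).of_relHom
    ⟨toSum, sumLex_of_monoArc_colouring⟩

theorem dicolourable_or_of_succ {k : ℕ} (h : Dicolourable (CyclicJoin D E) (k + 1)) :
    Dicolourable D k ∨ Dicolourable E k := by
  obtain ⟨α, hα⟩ := h
  by_cases hD : ∀ v, α (inl D E v) ≠ α none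
  · exact .inl (hα.dicolourable_of_relHom_of_forall_ne (inl D E) hD)
  by_cases hE : ∀ w, α (inr D E w) ≠ α none
  · exact .inr (hα.dicolourable_of_relHom_of_forall_ne (inr D E) hE)
  push Not at hD hE
  obtain ⟨v, hv⟩ := hD
  obtain ⟨w, hw⟩ := hE
  have triangle : Relation.TransGen (MonoArc (CyclicJoin D E) α) none none :=
    .head ⟨.root_left v, hv.symm⟩ <| .head ⟨.left_right v w, hv.trans hw.symm⟩ <|
      .single ⟨.right_root w, hw⟩
  exact absurd triangle (isDicolouring_iff_relAcyclic_monoArc.mp hα none)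

end CyclicJoin

theorem barc_succ (k : ℕ) : Barc (k + 1) = CyclicJoin (Barc k) (Barc k) := by
  ext x y
  constructor
  · intro hxy
    rcases x with _ | x | x <;> rcases y with _ | y | y
    exacts [hxy.elim, .root_left y, hxy.elim, hxy.elim, .left hxy, .left_right x y,
      .right_root x, hxy.elim, .right hxy]
  · rintro (_ | hxy | _ | hxy | _)
    exacts [trivial, hxy, trivial, hxy, trivial]

theorem oriented_barc (k : ℕ) : Oriented (Barc k) := by
  induction k with
  | zero => exact fun _ _ => False.elim
  | succ k ih => exact barc_succ k ▸ CyclicJoin.oriented ih ih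

theorem outDegenerate_barc (k : ℕ) : OutDegenerate (Barc k) k := by
  induction k with
  | zero =>
    rintro S ⟨v, hv⟩
    exact ⟨v, hv, (outDegOn_eq_zero fun _ _ => not_false).le⟩
  | succ k ih => exact barc_succ k ▸ CyclicJoin.outDegenerate (ih.mono k.le_succ) ih

theorem dicolourable_barc (k : ℕ) : Dicolourable (Barc k) (k + 1) := by
  induction k with
  | zero => exact ⟨fun _ => 0, fun _ => relAcyclic_of_forall_not fun _ _ h => h.1⟩
  | succ k ih => exact barc_succ k ▸ CyclicJoin.dicolourable ih ih

theorem not_dicolourable_barc (k : ℕ) : ¬ Dicolourable (Barc k) k := by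
  induction k with
  | zero => exact fun ⟨α, _⟩ => (α PUnit.unit).elim0
  | succ k ih =>
    intro h
    rw [barc_succ] at h
    exact (CyclicJoin.dicolourable_or_of_succ h).elim ih ih

/-- For every `k`, the oriented graph `B⃗_k` is `k`-out-degenerate and has
dichromatic number exactly `k + 1`. -/
theorem Bk_out_degenerate_dichromatic (k : ℕ) :
    Oriented (Barc k) ∧
    (∀ S : Set (Bvert k), S.Nonempty → ∃ v ∈ S, outDegOn (Barc k) S v ≤ k) ∧
    (∃ α : Bvert k → Fin (k + 1), IsDicolouring (Barc k) (k + 1) α) ∧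
    ¬ (∃ α : Bvert k → Fin k, IsDicolouring (Barc k) k α) :=
  ⟨oriented_barc k, outDegenerate_barc k, dicolourable_barc k, not_dicolourable_barc k⟩
end
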